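/- Let 𝒩 be a finite nonempty set of nonempty matroids and k = min_{N ∈ 𝒩} χ(N) − 1. Suppose some N₀ ∈ 𝒩 has a linearly independent subset I with χ(N₀ \ I) ≤ k, and let t be the smallest size of such a linearly independent set (over all choices of N₀ ∈ 𝒩 and I). Then for all sufficiently large n, ex(𝒩, n) = 2ⁿ(1 − 2^{−k}) + ex(𝒟(𝒩), t − 1). -/

import Mathlib

open scoped Classical

/-- `M` has an `N`-restriction: some injective linear image of `N` lies inside `M`. -/
def HasRestriction {α β : Type*} [AddCommMonoid α] [AddCommMonoid β]
    [Module (ZMod 2) α] [Module (ZMod 2) β] (N : Set α) (M : Set β) : Prop :=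
  ∃ ψ : α →ₗ[ZMod 2] β, Function.Injective ψ ∧ ψ '' N ⊆ M

/-- The set of distinct `N`-restrictions of `M` (as subsets of `M`). -/
def restrictionSet {α β : Type*} [AddCommMonoid α] [AddCommMonoid β]
    [Module (ZMod 2) α] [Module (ZMod 2) β] (N : Set α) (M : Set β) : Set (Set β) :=
  {S | S ⊆ M ∧ ∃ ψ : α →ₗ[ZMod 2] β, Function.Injective ψ ∧ S = ψ '' N}

/-- The Turán number for a single excluded matroid `N`. -/
noncomputable def exNum {α : Type*} [AddCommMonoid α] [Module (ZMod 2) α] (N : Set α) (n : ℕ) : ℕ :=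
  sSup {m | ∃ M : Set (Fin n → ZMod 2), 0 ∉ M ∧ ¬ HasRestriction N M ∧ M.ncard = m}

/-- The Turán number for a family of excluded matroids. -/
noncomputable def exNumFam (𝒩 : Set (Σ k : ℕ, Set (Fin k → ZMod 2))) (n : ℕ) : ℕ :=
  sSup {m | ∃ M : Set (Fin n → ZMod 2), 0 ∉ M ∧
    (∀ N ∈ 𝒩, ¬ HasRestriction N.2 M) ∧ M.ncard = m}

/-- The critical number of `M ⊆ 𝔽₂ⁿ`. -/
noncomputable def critNum {n : ℕ} (M : Set (Fin n → ZMod 2)) : ℕ :=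
  sInf {c | ∃ φ : (Fin n → ZMod 2) →ₗ[ZMod 2] (Fin c → ZMod 2), ∀ x ∈ M, φ x ≠ 0}

/-- The rank of `M`: dimension of its span. -/
noncomputable def rankM {n : ℕ} (M : Set (Fin n → ZMod 2)) : ℕ :=
  Module.finrank (ZMod 2) (Submodule.span (ZMod 2) M)

/-- `M` is a copy of `N^{n,t}`. -/
def IsCopyNnt {d : ℕ} (N : Set (Fin d → ZMod 2)) (n t : ℕ)
    (M : Set (Fin n → ZMod 2)) : Prop :=
  ∃ F : Submodule (ZMod 2) (Fin n → ZMod 2), Module.finrank (ZMod 2) F = n - t ∧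
    ∃ θ : (Fin d → ZMod 2) →ₗ[ZMod 2] (Fin n → ZMod 2),
      Function.Injective θ ∧ (∀ x, θ x ∈ F) ∧ M = θ '' N ∪ {x | x ∉ F}

/-- The decomposition family `𝒟(𝒩)`. -/
def decompFam (𝒩 : Set (Σ k : ℕ, Set (Fin k → ZMod 2))) (k : ℕ) :
    Set (Σ k : ℕ, Set (Fin k → ZMod 2)) :=
  {D | 0 ∉ D.2 ∧
    (∃ N ∈ 𝒩, ∃ M : Set (Fin N.1 → ZMod 2), IsCopyNnt D.2 N.1 k M ∧ HasRestriction N.2 M) ∧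
    ∀ D' : Σ k : ℕ, Set (Fin k → ZMod 2), 0 ∉ D'.2 →
      (∃ N ∈ 𝒩, ∃ M : Set (Fin N.1 → ZMod 2), IsCopyNnt D'.2 N.1 k M ∧ HasRestriction N.2 M) →
      HasRestriction D'.2 D.2 → HasRestriction D.2 D'.2}

/-- The cycle matroid of a simple graph. -/
def cycleMatroid {V : Type*} [DecidableEq V] (G : SimpleGraph V) : Set (V → ZMod 2) :=
  {x | ∃ u v, G.Adj u v ∧ x = Pi.single u 1 + Pi.single v 1}

abbrev QQ (n : ℕ) := Fin n → ZMod 2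

section Stab

/-- extend a linear map by one coordinate -/
noncomputable def extMap {V : Type} [AddCommGroup V] [Module (ZMod 2) V] {k : ℕ}
    (L : QQ k →ₗ[ZMod 2] V) (v : V) : QQ (k+1) →ₗ[ZMod 2] V :=
  L ∘ₗ (LinearMap.funLeft (ZMod 2) (ZMod 2) Fin.succ) +
    (LinearMap.proj (0 : Fin (k+1)) : QQ (k+1) →ₗ[ZMod 2] ZMod 2).smulRight v

lemma extMap_apply {V : Type} [AddCommGroup V] [Module (ZMod 2) V] {k : ℕ}
    (L : QQ k →ₗ[ZMod 2] V) (v : V) (a : QQ (k+1)) :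
    extMap L v a = L (fun i => a i.succ) + a 0 • v := by
  simp [extMap, LinearMap.funLeft, Function.comp_def]

lemma zmod2_cases (c : ZMod 2) : c = 0 ∨ c = 1 := by
  revert c; decide

lemma tail_ne {k : ℕ} {a : QQ (k+1)} (ha : a ≠ 0) (h0 : a 0 = 0) :
    (fun i : Fin k => a i.succ) ≠ 0 := by
  intro h
  apply ha
  funext i
  refine Fin.cases h0 (fun j => ?_) i
  exact congrFun h j

lemma add_add_self' {V : Type} [AddCommGroup V] [Module (ZMod 2) V] (x y : V) :
    x + y + y = x := by
  rw [add_assoc, ZModModule.add_self, add_zero]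

def HasBB {V : Type} [AddCommGroup V] [Module (ZMod 2) V] (j s : ℕ) (M : Set V) : Prop :=
  ∃ (L : QQ j →ₗ[ZMod 2] V) (ι : QQ s →ₗ[ZMod 2] V), Function.Injective ι ∧
    ∀ a, a ≠ 0 → ∀ b, L a + ι b ∈ M

lemma affine_density (s : ℕ) : ∀ δ : ℝ, 0 < δ → ∃ c : ℝ, 0 < c ∧ ∃ C : ℝ,
    ∀ (V : Type) [AddCommGroup V] [Module (ZMod 2) V] [Fintype V],
      C ≤ Fintype.card V → ∀ f : V → ℝ, (∀ x, 0 ≤ f x) → (∀ x, f x ≤ 1) →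
      δ * Fintype.card V ≤ ∑ x, f x →
      ∃ ι : QQ s →ₗ[ZMod 2] V, Function.Injective ι ∧ ∃ g : V → ℝ,
        (∀ x, 0 ≤ g x) ∧ (∀ x, g x ≤ 1) ∧ c * Fintype.card V ≤ ∑ x, g x ∧
        ∀ x, g x ≠ 0 → ∀ b, f (x + ι b) ≠ 0 := by
  induction s with
  | zero =>
    intro δ hδ
    refine ⟨δ, hδ, 0, ?_⟩
    intro V _ _ _ _ f h0 h1 hs
    refine ⟨0, fun a b _ => Subsingleton.elim a b, f, h0, h1, hs, ?_⟩
    intro x hx b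
    simpa using hx
  | succ s ih =>
    intro δ hδ
    obtain ⟨c, hc, C, h⟩ := ih δ hδ
    refine ⟨c^2/4, by positivity, max C (2 * 2^s / c), ?_⟩
    intro V _ _ _ hC f h0 h1 hs
    obtain ⟨ι, hι, g, g0, g1, gs, hg⟩ := h V (le_trans (le_max_left _ _) hC) f h0 h1 hs
    have hC2 : 2 * 2^s / c ≤ (Fintype.card V : ℝ) := le_trans (le_max_right _ _) hC
    have hC3 : 2 * 2^s ≤ c * (Fintype.card V : ℝ) := by
      rw [div_le_iff₀ hc] at hC2; linarith
    have key : ∃ u, u ∉ Set.range ι ∧ c^2/4 * Fintype.card V ≤ ∑ x, g x * g (x + u) := by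
      by_contra hcon
      push Not at hcon
      have hsq : ∑ u, ∑ x, g x * g (x + u) = (∑ x, g x) ^ 2 := by
        rw [Finset.sum_comm, sq, Finset.sum_mul]
        refine Finset.sum_congr rfl fun x _ => ?_
        rw [← Finset.mul_sum]
        congr 1
        exact Equiv.sum_comp (Equiv.addLeft x) g
      have hle : ∀ u, ∑ x, g x * g (x + u) ≤
          (∑ b, if ι b = u then ∑ x, g x else 0) + c^2/4 * Fintype.card V := by
        intro u
        by_cases hu : u ∈ Set.range ι
        · obtain ⟨b, hb⟩ := hu
          have e1 : ∑ x, g x * g (x + u) ≤ ∑ x, g x :=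
            Finset.sum_le_sum fun x _ => mul_le_of_le_one_right (g0 x) (g1 _)
          have e2 : (∑ x, g x) ≤ ∑ b, if ι b = u then ∑ x, g x else 0 := by
            refine le_trans (le_of_eq ?_) (Finset.single_le_sum (f := fun b => if ι b = u then ∑ x, g x else 0) ?_ (Finset.mem_univ b))
            · simp [hb]
            · intro i _
              split_ifs
              · exact Finset.sum_nonneg fun x _ => g0 x
              · exact le_rfl
          have : 0 ≤ c^2/4 * (Fintype.card V : ℝ) := by positivity
          linarith
        · have e1 := (hcon u hu).le
          have e2 : 0 ≤ ∑ b, if ι b = u then ∑ x, g x else 0 := by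
            refine Finset.sum_nonneg fun i _ => ?_
            split_ifs
            · exact Finset.sum_nonneg fun x _ => g0 x
            · exact le_rfl
          linarith
      have hsum := Finset.sum_le_sum (s := Finset.univ) fun u _ => hle u
      rw [hsq, Finset.sum_add_distrib, Finset.sum_comm] at hsum
      simp only [Finset.sum_ite_eq, Finset.mem_univ, if_true, Finset.sum_const, nsmul_eq_mul,
        Finset.card_univ, Fintype.card_fun, ZMod.card, Fintype.card_fin] at hsum
      push_cast at hsum
      set G := ∑ x, g x
      set v : ℝ := (Fintype.card V : ℝ)
      have hp : (0:ℝ) < 2^s := by positivity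
      have hG : 0 < G := by linarith
      have hv : 0 ≤ c * v := by linarith
      nlinarith [mul_nonneg hG.le (by linarith : (0:ℝ) ≤ G - 2 * 2^s), mul_nonneg hv (by linarith : 0 ≤ G - c * v), mul_nonneg hG.le (by linarith : 0 ≤ G - c * v), mul_pos hG hG]
    obtain ⟨u, hu, hus⟩ := key
    refine ⟨extMap ι u, ?_, fun x => g x * g (x + u), ?_, ?_, hus, ?_⟩
    · rw [injective_iff_map_eq_zero]
      intro a ha
      rw [extMap_apply] at ha
      rcases zmod2_cases (a 0) with h00 | h00
      · by_contra hne
        rw [h00, zero_smul, add_zero] at ha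
        exact tail_ne hne h00 ((injective_iff_map_eq_zero ι).1 hι _ ha)
      · rw [h00, one_smul] at ha
        exact absurd ⟨_, by rw [← ZModModule.neg_eq_self u]; exact eq_neg_of_add_eq_zero_left ha⟩ hu
    · intro x; exact mul_nonneg (g0 _) (g0 _)
    · intro x; exact mul_le_one₀ (g1 _) (g0 _) (g1 _)
    · intro x hx a
      rw [extMap_apply]
      rcases zmod2_cases (a 0) with h00 | h00
      · rw [h00, zero_smul, add_zero]
        exact hg x (left_ne_zero_of_mul hx) _
      · rw [h00, one_smul]
        have := hg (x + u) (right_ne_zero_of_mul hx) (fun i => a i.succ)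
        convert this using 2
        abel

lemma affine_density' (s : ℕ) (δ : ℝ) (hδ : 0 < δ) : ∃ m : ℕ, s ≤ m ∧
    ∀ f : QQ m → ℝ, (∀ x, 0 ≤ f x) → (∀ x, f x ≤ 1) → δ * 2^m ≤ ∑ x, f x →
      ∃ ι : QQ s →ₗ[ZMod 2] QQ m, Function.Injective ι ∧ ∃ x, ∀ b, f (x + ι b) ≠ 0 := by
  obtain ⟨c, hc, C, h⟩ := affine_density s δ hδ
  obtain ⟨m0, hm0⟩ := exists_nat_ge C
  refine ⟨max s m0, le_max_left _ _, ?_⟩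
  intro f f0 f1 hf
  have hcard : (Fintype.card (QQ (max s m0)) : ℝ) = 2 ^ (max s m0) := by
    simp [ZMod.card]
  obtain ⟨ι, hι, g, g0, g1, gs, hg⟩ := h (QQ (max s m0)) (by
    rw [hcard]
    refine hm0.trans ?_
    have h1 : m0 ≤ max s m0 := le_max_right _ _
    have h2 : max s m0 < 2 ^ (max s m0) := Nat.lt_two_pow_self
    have : m0 ≤ 2 ^ (max s m0) := by omega
    exact_mod_cast this) f f0 f1 (by rw [hcard]; exact hf)
  refine ⟨ι, hι, ?_⟩
  by_contra hcon
  have : ∀ x, g x = 0 := by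
    intro x
    by_contra hx
    exact hcon ⟨x, hg x hx⟩
  simp only [this, Finset.sum_const_zero, hcard] at gs
  have : 0 < c * 2 ^ (max s m0) := by positivity
  linarith

noncomputable def zc {V : Type} (M : Set V) (x : V) : ℝ := if x ∈ M then 0 else 1

lemma zc_nonneg {V : Type} (M : Set V) (x : V) : 0 ≤ zc M x := by
  unfold zc; split_ifs <;> norm_num

lemma zc_le_one {V : Type} (M : Set V) (x : V) : zc M x ≤ 1 := by
  unfold zc; split_ifs <;> norm_num

noncomputable def dens {V : Type} [AddCommGroup V] [Module (ZMod 2) V] {m : ℕ}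
    (M : Set V) (ι : QQ m →ₗ[ZMod 2] V) (x : V) : ℝ := (∑ e, zc M (x + ι e)) / 2 ^ m

lemma dens_nonneg {V : Type} [AddCommGroup V] [Module (ZMod 2) V] {m : ℕ}
    (M : Set V) (ι : QQ m →ₗ[ZMod 2] V) (x : V) : 0 ≤ dens M ι x :=
  div_nonneg (Finset.sum_nonneg fun e _ => zc_nonneg _ _) (by positivity)

lemma dens_mul {V : Type} [AddCommGroup V] [Module (ZMod 2) V] {m : ℕ}
    (M : Set V) (ι : QQ m →ₗ[ZMod 2] V) (x : V) :
    ∑ e, zc M (x + ι e) = dens M ι x * 2 ^ m := by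
  unfold dens; field_simp

lemma dens_shift {V : Type} [AddCommGroup V] [Module (ZMod 2) V] {m : ℕ}
    (M : Set V) (ι : QQ m →ₗ[ZMod 2] V) (x : V) (e : QQ m) : dens M ι (x + ι e) = dens M ι x := by
  unfold dens
  congr 1
  rw [← Equiv.sum_comp (Equiv.addLeft e) (fun e => zc M (x + ι e))]
  refine Finset.sum_congr rfl fun f _ => ?_
  simp [add_assoc]

/-- property of `m` from the affine density lemma -/
def AffDens (s m : ℕ) (δ : ℝ) : Prop := s ≤ m ∧
    ∀ f : QQ m → ℝ, (∀ x, 0 ≤ f x) → (∀ x, f x ≤ 1) → δ * 2^m ≤ ∑ x, f x →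
      ∃ ι : QQ s →ₗ[ZMod 2] QQ m, Function.Injective ι ∧ ∃ x, ∀ b, f (x + ι b) ≠ 0

def Valid {V : Type} [AddCommGroup V] [Module (ZMod 2) V] {k m : ℕ} (M : Set V)
    (L : QQ k →ₗ[ZMod 2] V) (ι : QQ m →ₗ[ZMod 2] V) : Prop :=
  Function.Injective ι ∧ ∀ a, a ≠ 0 → ∀ b, L a + ι b ∈ M

lemma ext1 {V : Type} [AddCommGroup V] [Module (ZMod 2) V] {k m s : ℕ} {M : Set V} {δ : ℝ}
    {L : QQ k →ₗ[ZMod 2] V} {ι : QQ m →ₗ[ZMod 2] V} (hv : Valid M L ι)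
    (hm : AffDens s m δ) (hno : ¬ HasBB (k+1) s M) (y : V) :
    ∑ e : QQ m, (if ∀ a, y + L a + ι e ∈ M then (1:ℝ) else 0) ≤ δ * 2 ^ m := by
  by_contra hcon
  push Not at hcon
  obtain ⟨κ, hκ, x, hx⟩ := hm.2 _ (fun e => by positivity) (fun e => by split_ifs <;> norm_num) hcon.le
  apply hno
  refine ⟨extMap L (y + ι x), ι ∘ₗ κ, hv.1.comp hκ, ?_⟩
  intro a ha b
  rw [extMap_apply]
  rcases zmod2_cases (a 0) with h0 | h0
  · rw [h0, zero_smul, add_zero]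
    exact hv.2 _ (tail_ne ha h0) _
  · rw [h0, one_smul]
    have := hx b
    simp only [ne_eq, ite_eq_right_iff, one_ne_zero, imp_false, not_not] at this
    have := this (fun i => a i.succ)
    convert this using 1
    simp only [LinearMap.comp_apply, map_add]
    abel

lemma lem_i {V : Type} [AddCommGroup V] [Module (ZMod 2) V] {k m s : ℕ} {M : Set V} {δ : ℝ}
    {L : QQ k →ₗ[ZMod 2] V} {ι : QQ m →ₗ[ZMod 2] V} (hv : Valid M L ι)
    (hm : AffDens s m δ) (hno : ¬ HasBB (k+1) s M) (y : V) :
    1 - δ ≤ ∑ a, dens M ι (y + L a) := by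
  have h1 := ext1 hv hm hno y
  have h2 : ∀ e : QQ m, 1 - ∑ a, zc M (y + L a + ι e) ≤ (if ∀ a, y + L a + ι e ∈ M then (1:ℝ) else 0) := by
    intro e
    have hs : 0 ≤ ∑ a, zc M (y + L a + ι e) := Finset.sum_nonneg fun e _ => zc_nonneg _ _
    split_ifs with h
    · linarith
    · push Not at h
      obtain ⟨a, ha⟩ := h
      have := Finset.single_le_sum (f := fun a => zc M (y + L a + ι e)) (fun i _ => zc_nonneg _ _) (Finset.mem_univ a)
      have h3 : zc M (y + L a + ι e) = 1 := by simp [zc, ha]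
      simp only [h3] at this
      linarith
  have h3 := Finset.sum_le_sum (s := Finset.univ) fun e _ => h2 e
  rw [Finset.sum_sub_distrib, Finset.sum_comm] at h3
  simp only [dens_mul, ← Finset.sum_mul] at h3
  simp only [Finset.sum_const, nsmul_eq_mul,
        Finset.card_univ, Fintype.card_fun, ZMod.card, Fintype.card_fin] at h3
  push_cast at h3
  have hp : (0:ℝ) < 2 ^ m := by positivity
  have h4 : (1 - ∑ a, dens M ι (y + L a)) * 2 ^ m ≤ δ * 2 ^ m := by linarith
  have := le_of_mul_le_mul_right h4 hp
  linarith

lemma exists_func {k : ℕ} {w : QQ k} (hw : w ≠ 0) : ∃ l : QQ k →ₗ[ZMod 2] ZMod 2, l w = 1 := by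
  obtain ⟨i, hi⟩ := Function.ne_iff.1 hw
  refine ⟨LinearMap.proj i, ?_⟩
  rcases zmod2_cases (w i) with h | h
  · exact absurd h hi
  · exact h

lemma lem_ii {V : Type} [AddCommGroup V] [Module (ZMod 2) V] {k m s : ℕ} {M : Set V} {δ : ℝ}
    {L : QQ k →ₗ[ZMod 2] V} {ι : QQ m →ₗ[ZMod 2] V} (hv : Valid M L ι)
    (hm : AffDens s m δ) (hno : ¬ HasBB (k+1) s M) (y : V) {u v : QQ k} (huv : u ≠ v) :
    dens M ι (y + L u) * dens M ι (y + L v) ≤ ∑ a, dens M ι (y + L a) - (1 - δ) := by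
  obtain ⟨l, hl⟩ := exists_func (w := u + v) (by
    intro h; apply huv; rw [← ZModModule.neg_eq_self v]; exact eq_neg_of_add_eq_zero_left h)
  rw [map_add] at hl
  have hp : (0:ℝ) < 2 ^ m := by positivity
  -- for each c
  have hc : ∀ c : QQ m, (2:ℝ)^m - (∑ a, dens M ι (y + L a)) * 2 ^ m +
      ∑ e, zc M (y + L u + ι e) * zc M (y + L v + ι (e + c)) ≤ δ * 2 ^ m := by
    intro c
    let R : QQ k →ₗ[ZMod 2] QQ m := l.smulRight c
    have hR : ∀ a, R a = l a • c := fun a => rfl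
    have hv' : Valid M (L + ι ∘ₗ R) ι := by
      refine ⟨hv.1, fun a ha b => ?_⟩
      have := hv.2 a ha (R a + b)
      convert this using 1
      simp [add_assoc]
    have h1 := ext1 hv' hm hno y
    have h2 : ∀ e : QQ m, 1 - ∑ a, zc M (y + (L + ι ∘ₗ R) a + ι e) +
        zc M (y + (L + ι ∘ₗ R) u + ι e) * zc M (y + (L + ι ∘ₗ R) v + ι e)
          ≤ (if ∀ a, y + (L + ι ∘ₗ R) a + ι e ∈ M then (1:ℝ) else 0) := by
      intro e
      generalize hg : (fun a => y + (L + ι ∘ₗ R) a + ι e) = g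
      have hg' : ∀ a, y + (L + ι ∘ₗ R) a + ι e = g a := fun a => congrFun hg a
      simp only [hg']
      split_ifs with h
      · have : ∀ a, zc M (g a) = 0 := fun a => by simp [zc, h a]
        simp [this]
      · push Not at h
        obtain ⟨a, ha⟩ := h
        have hsub := Finset.sum_le_sum_of_subset_of_nonneg (f := fun a => zc M (g a)) (Finset.subset_univ {u, v}) (fun i _ _ => zc_nonneg _ _)
        rw [Finset.sum_pair huv] at hsub
        have := Finset.single_le_sum (f := fun a => zc M (g a)) (fun i _ => zc_nonneg _ _) (Finset.mem_univ a)
        have h3 : zc M (g a) = 1 := by simp [zc, ha]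
        simp only [h3] at this
        by_cases hgu : g u ∈ M
        · have : zc M (g u) = 0 := by simp [zc, hgu]
          rw [this]; linarith
        · by_cases hgv : g v ∈ M
          · have : zc M (g v) = 0 := by simp [zc, hgv]
            rw [this]; linarith
          · have e1 : zc M (g u) = 1 := by simp [zc, hgu]
            have e2 : zc M (g v) = 1 := by simp [zc, hgv]
            simp only [e1, e2] at hsub ⊢
            linarith
    have h3 := Finset.sum_le_sum (s := Finset.univ) fun e _ => h2 e
    rw [Finset.sum_add_distrib, Finset.sum_sub_distrib, Finset.sum_comm] at h3
    have hd : ∀ a, dens M ι (y + (L + ι ∘ₗ R) a) = dens M ι (y + L a) := by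
      intro a
      rw [← dens_shift M ι (y + L a) (R a)]
      simp [add_assoc]
    simp only [dens_mul, hd, ← Finset.sum_mul] at h3
    simp only [Finset.sum_const, nsmul_eq_mul,
        Finset.card_univ, Fintype.card_fun, ZMod.card, Fintype.card_fin] at h3
    push_cast at h3
    have h4 : ∑ e, zc M (y + (L + ι ∘ₗ R) u + ι e) * zc M (y + (L + ι ∘ₗ R) v + ι e)
        = ∑ e, zc M (y + L u + ι e) * zc M (y + L v + ι (e + c)) := by
      rw [← Equiv.sum_comp (Equiv.addRight (R u)) (fun e => zc M (y + L u + ι e) * zc M (y + L v + ι (e + c)))]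
      refine Finset.sum_congr rfl fun e _ => ?_
      have hRc : R u + c = R v := by
        rw [hR, hR]
        have : l v = 1 + l u := by
          rw [← hl]; rcases zmod2_cases (l u) with h | h <;> rcases zmod2_cases (l v) with h' | h' <;> rw [h, h'] <;> decide
        rw [this, add_smul, one_smul, add_comm]
      congr 2
      · simp only [LinearMap.add_apply, LinearMap.comp_apply, Equiv.coe_addRight, map_add]; abel
      · rw [Equiv.coe_addRight, add_assoc e, hRc]
        simp only [LinearMap.add_apply, LinearMap.comp_apply, map_add]; abel
    rw [h4] at h3
    linarith
  have h5 := Finset.sum_le_sum (s := Finset.univ) fun c _ => hc c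
  rw [Finset.sum_add_distrib] at h5
  have h6 : ∑ c : QQ m, ∑ e, zc M (y + L u + ι e) * zc M (y + L v + ι (e + c)) =
      (dens M ι (y + L u) * 2 ^ m) * (dens M ι (y + L v) * 2 ^ m) := by
    rw [Finset.sum_comm, ← dens_mul, ← dens_mul, Finset.sum_mul]
    refine Finset.sum_congr rfl fun e _ => ?_
    rw [← Finset.mul_sum]
    congr 1
    exact Equiv.sum_comp (Equiv.addLeft e) (fun e => zc M (y + L v + ι e))
  rw [h6] at h5
  simp only [Finset.sum_const, nsmul_eq_mul,
        Finset.card_univ, Fintype.card_fun, ZMod.card, Fintype.card_fin] at h5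
  push_cast at h5
  have h7 : (dens M ι (y + L u) * dens M ι (y + L v)) * (2^m * 2^m) ≤ (∑ a, dens M ι (y + L a) - (1 - δ)) * (2^m * 2^m) := by
    nlinarith
  exact le_of_mul_le_mul_right h7 (by positivity)

/-- sum over y -/
lemma sum_dens {V : Type} [AddCommGroup V] [Module (ZMod 2) V] [Fintype V] {k m : ℕ} (M : Set V)
    (L : QQ k →ₗ[ZMod 2] V) (ι : QQ m →ₗ[ZMod 2] V) :
    ∑ y, ∑ a, dens M ι (y + L a) = 2 ^ k * ∑ y, zc M y := by
  have h1 : ∀ v, ∑ y, dens M ι (y + v) = ∑ y, zc M y := by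
    intro v
    unfold dens
    rw [← Finset.sum_div, Finset.sum_comm]
    have : ∀ e, ∑ y, zc M (y + v + ι e) = ∑ y, zc M y := by
      intro e
      simp only [add_assoc]
      exact Equiv.sum_comp (Equiv.addRight (v + ι e)) (zc M)
    simp only [this, Finset.sum_const, nsmul_eq_mul,
        Finset.card_univ, Fintype.card_fun, ZMod.card, Fintype.card_fin]
    push_cast
    field_simp
  rw [Finset.sum_comm]
  simp only [h1, Finset.sum_const, nsmul_eq_mul,
        Finset.card_univ, Fintype.card_fun, ZMod.card, Fintype.card_fin]
  push_cast
  rfl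

lemma exists_inj (s : ℕ) {V : Type} [AddCommGroup V] [Module (ZMod 2) V] [Fintype V]
    (h : s ≤ Module.finrank (ZMod 2) V) : ∃ ι : QQ s →ₗ[ZMod 2] V, Function.Injective ι := by
  obtain ⟨f, hf⟩ := exists_linearIndependent_of_le_finrank h
  exact ⟨Fintype.linearCombination (ZMod 2) f, hf.fintypeLinearCombination_injective⟩

lemma erdos_stone (j : ℕ) : ∀ s : ℕ, ∃ n₀ : ℕ, ∀ (V : Type) [AddCommGroup V] [Module (ZMod 2) V]
    [Fintype V], n₀ ≤ Module.finrank (ZMod 2) V → ∀ M : Set V,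
    2 ^ j * ∑ y, zc M y ≤ Fintype.card V → HasBB j s M := by
  induction j with
  | zero =>
    intro s
    refine ⟨s, ?_⟩
    intro V _ _ _ hn M _
    obtain ⟨ι, hι⟩ := exists_inj s hn
    exact ⟨0, ι, hι, fun a ha => absurd (Subsingleton.elim a 0) ha⟩
  | succ j ih =>
    intro s
    obtain ⟨m, hm⟩ := affine_density' s (1/4) (by norm_num)
    obtain ⟨n₀, h⟩ := ih m
    refine ⟨n₀, ?_⟩
    intro V _ _ _ hn M hM
    by_contra hno
    have hz : 0 ≤ ∑ y, zc M y := Finset.sum_nonneg fun _ _ => zc_nonneg _ _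
    have hcard : (0:ℝ) < Fintype.card V := by exact_mod_cast Fintype.card_pos
    rw [pow_succ] at hM
    have h2 : (0:ℝ) ≤ 2 ^ j * ∑ y, zc M y := by positivity
    obtain ⟨L, ι, hι, hL⟩ := h V hn M (by linarith)
    have h1 := Finset.sum_le_sum (s := Finset.univ) fun y _ => lem_i (L := L) (ι := ι) ⟨hι, hL⟩ hm hno y
    rw [sum_dens] at h1
    simp only [Finset.sum_const, nsmul_eq_mul, Finset.card_univ] at h1
    linarith

lemma exists_zero_of_sum_lt {m : ℕ} (h : QQ m → ℝ) (hh : ∑ e, h e < 2 ^ m) : ∃ e, h e < 1 := by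
  by_contra hcon
  push Not at hcon
  have := Finset.sum_le_sum (s := Finset.univ) fun e _ => hcon e
  simp only [Finset.sum_const, nsmul_eq_mul,
        Finset.card_univ, Fintype.card_fun, ZMod.card, Fintype.card_fin] at this
  push_cast at this
  linarith

lemma zc_lt_one {V : Type} {M : Set V} {x : V} (h : zc M x < 1) : x ∈ M := by
  unfold zc at h
  by_contra hx
  simp [hx] at h

lemma lem_triple {V : Type} [AddCommGroup V] [Module (ZMod 2) V] {k m s : ℕ} {M : Set V} {η : ℝ}
    {L : QQ k →ₗ[ZMod 2] V} {ι : QQ m →ₗ[ZMod 2] V} (hv : Valid M L ι) (hsm : s ≤ m)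
    (hη : 2 ^ k * (2 ^ s * η) ≤ 1 / 4) {x₁ x₂ : V} {w₀ : QQ k} (hw₀ : w₀ ≠ 0)
    (h1 : ∀ w, w ≠ 0 → dens M ι (x₁ + L w) ≤ η)
    (h2 : ∀ w, w ≠ 0 → dens M ι (x₂ + L w) ≤ η)
    (h3 : ∀ w, w ≠ w₀ → dens M ι (x₁ + x₂ + L w) ≤ η) : HasBB (k+1) s M := by
  obtain ⟨l, hl⟩ := exists_func hw₀
  obtain ⟨κ, hκ⟩ := exists_inj s (V := QQ m) (by simpa using hsm)
  have hp : (0:ℝ) < 2 ^ m := by positivity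
  have hη0 : 0 ≤ η := le_trans (dens_nonneg _ _ _) (h1 w₀ hw₀)
  -- general count
  have gen : ∀ (x : V) (P : QQ k → Prop), (∀ w, P w → dens M ι (x + L w) ≤ η) → ∀ g : QQ m,
      ∑ e, ∑ w, ∑ b, (if P w then zc M (x + L w + ι (e + g + κ b)) else 0) ≤ 1/4 * 2 ^ m := by
    intro x P hP g
    rw [Finset.sum_comm]
    have : ∀ w ∈ (Finset.univ : Finset (QQ k)), ∑ e, ∑ b, (if P w then zc M (x + L w + ι (e + g + κ b)) else 0) ≤ 2 ^ s * (η * 2^m) := by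
      intro w _
      rw [Finset.sum_comm]
      have : ∀ b ∈ (Finset.univ : Finset (QQ s)), ∑ e, (if P w then zc M (x + L w + ι (e + g + κ b)) else 0) ≤ η * 2^m := by
        intro b _
        split_ifs with hw
        · have := Equiv.sum_comp (Equiv.addRight (g + κ b)) (fun e => zc M (x + L w + ι e))
          simp only [Equiv.coe_addRight, ← add_assoc] at this
          rw [this, dens_mul]
          exact mul_le_mul_of_nonneg_right (hP w hw) hp.le
        · simp; positivity
      refine (Finset.sum_le_sum this).trans (le_of_eq ?_)
      simp [ZMod.card]
    refine (Finset.sum_le_sum this).trans ?_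
    simp only [Finset.sum_const, nsmul_eq_mul,
        Finset.card_univ, Fintype.card_fun, ZMod.card, Fintype.card_fin]
    push_cast
    nlinarith
  have pick : ∀ (x : V) (P : QQ k → Prop) (g e : QQ m),
      ∑ w, ∑ b, (if P w then zc M (x + L w + ι (e + g + κ b)) else 0) < 1 →
      ∀ w, P w → ∀ b, x + L w + ι (e + g + κ b) ∈ M := by
    intro x P g e hlt w hw b
    apply zc_lt_one
    refine lt_of_le_of_lt ?_ hlt
    have n1 : ∀ w b, 0 ≤ (if P w then zc M (x + L w + ι (e + g + κ b)) else 0) := by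
      intro w b; split_ifs
      · exact zc_nonneg _ _
      · exact le_rfl
    refine le_trans ?_ (Finset.single_le_sum (f := fun w => ∑ b, (if P w then zc M (x + L w + ι (e + g + κ b)) else 0)) (fun i _ => Finset.sum_nonneg fun b _ => n1 i b) (Finset.mem_univ w))
    refine le_trans ?_ (Finset.single_le_sum (f := fun b => (if P w then zc M (x + L w + ι (e + g + κ b)) else 0)) (fun b _ => n1 w b) (Finset.mem_univ b))
    simp [hw]
  obtain ⟨f₁, hf₁⟩ := exists_zero_of_sum_lt _ (lt_of_le_of_lt (gen x₁ (fun w => w ≠ 0) h1 0) (by linarith))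
  have g2 := gen x₂ (fun w => w ≠ 0) h2 0
  have g3 := gen (x₁ + x₂) (fun w => w ≠ w₀) h3 f₁
  have g4 := add_le_add g2 g3
  rw [← Finset.sum_add_distrib] at g4
  obtain ⟨f₂, hf₂⟩ := exists_zero_of_sum_lt _ (lt_of_le_of_lt g4 (by linarith))
  have nn : ∀ (x : V) (P : QQ k → Prop) (g e : QQ m),
      0 ≤ ∑ w, ∑ b, (if P w then zc M (x + L w + ι (e + g + κ b)) else 0) := by
    intro x P g e
    refine Finset.sum_nonneg fun w _ => Finset.sum_nonneg fun b _ => ?_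
    split_ifs
    · exact zc_nonneg _ _
    · exact le_rfl
  have r1 := pick x₁ (fun w => w ≠ 0) 0 f₁ hf₁
  have r2 := pick x₂ (fun w => w ≠ 0) 0 f₂ (by linarith [nn (x₁ + x₂) (fun w => w ≠ w₀) f₁ f₂])
  have r3 := pick (x₁ + x₂) (fun w => w ≠ w₀) f₁ f₂ (by linarith [nn x₂ (fun w => w ≠ 0) 0 f₂])
  refine ⟨extMap (L + l.smulRight (x₁ + ι f₁)) (x₁ + ι f₁ + (x₂ + ι f₂)), ι ∘ₗ κ, hv.1.comp hκ, ?_⟩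
  intro a ha b
  rw [extMap_apply]
  set w : QQ k := fun i => a i.succ with hw
  simp only [LinearMap.add_apply, LinearMap.smulRight_apply, LinearMap.comp_apply]
  rcases zmod2_cases (a 0) with h0 | h0
  · have hwne : w ≠ 0 := tail_ne ha h0
    rcases zmod2_cases (l w) with hlw | hlw
    · rw [h0, hlw, zero_smul, zero_smul, add_zero, add_zero]
      exact hv.2 w hwne _
    · have := r1 w hwne b
      rw [h0, hlw, zero_smul, one_smul, add_zero]
      convert this using 1
      simp only [map_add, map_zero]; abel
  · rcases zmod2_cases (l w) with hlw | hlw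
    · have := r3 w (by rintro rfl; rw [hl] at hlw; exact one_ne_zero hlw) b
      rw [h0, hlw, zero_smul, one_smul, add_zero]
      convert this using 1
      simp only [map_add]; abel
    · have := r2 w (by intro h; rw [h, map_zero] at hlw; exact zero_ne_one hlw) b
      rw [h0, hlw, one_smul, one_smul]
      convert this using 1
      have e : L w + (x₁ + ι f₁) + (x₁ + ι f₁ + (x₂ + ι f₂)) = L w + (x₂ + ι f₂) := by
        rw [← add_assoc, add_add_self']
      rw [e]
      simp only [map_add, map_zero]; abel

lemma lem_good {V : Type} [AddCommGroup V] [Module (ZMod 2) V] {k m s : ℕ} {M : Set V} {δ δ₁ η : ℝ}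
    {L : QQ k →ₗ[ZMod 2] V} {ι : QQ m →ₗ[ZMod 2] V} (hv : Valid M L ι)
    (hm : AffDens s m δ₁) (hno : ¬ HasBB (k+1) s M) (y : V)
    (hδ₁ : δ₁ ≤ 1/2) (hδ : δ₁ ≤ δ) (hη : 2 * δ * 2 ^ (k+1) ≤ η)
    (hy : ∑ a, dens M ι (y + L a) ≤ 1 + δ) :
    ∃ u, ∀ w, w ≠ 0 → dens M ι (y + L u + L w) ≤ η := by
  have h1 := lem_i hv hm hno y
  have hex : ∃ u, 1 / 2 ^ (k+1) ≤ dens M ι (y + L u) := by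
    by_contra hcon
    push Not at hcon
    have := Finset.sum_lt_sum_of_nonempty (s := Finset.univ) Finset.univ_nonempty fun a _ => hcon a
    simp only [Finset.sum_const, nsmul_eq_mul,
        Finset.card_univ, Fintype.card_fun, ZMod.card, Fintype.card_fin] at this
    push_cast at this
    rw [pow_succ] at this
    have e : (2:ℝ) ^ k * (1 / (2 ^ k * 2)) = 1/2 := by field_simp
    rw [e] at this
    linarith
  obtain ⟨u, hu⟩ := hex
  refine ⟨u, fun w hw => ?_⟩
  have h2 := lem_ii hv hm hno y (u := u) (v := u + w) (by simpa using hw)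
  rw [map_add, ← add_assoc] at h2
  have h3 := dens_nonneg M ι (y + L u + L w)
  have h4 : 1 / 2 ^ (k+1) * dens M ι (y + L u + L w) ≤ 2 * δ :=
    (mul_le_mul_of_nonneg_right hu h3).trans (by linarith)
  have hp : (0:ℝ) < 2 ^ (k+1) := by positivity
  rw [one_div, inv_mul_le_iff₀ hp] at h4
  linarith

lemma near_subspace {V : Type} [AddCommGroup V] [Module (ZMod 2) V] [Fintype V] (T B : Finset V)
    (hTT : ∀ x ∈ T, ∀ y ∈ T, x + y ∈ T ∨ x + y ∈ B) (hcard : 4 * B.card < T.card) :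
    ∃ F : Submodule (ZMod 2) V, (∀ x ∈ T, x ∈ F) ∧ ∀ x ∈ F, x ∈ T ∨ x ∈ B := by
  let miss : V → Finset V := fun c => T.filter (fun x => x + c ∉ T)
  have hm1 : ∀ c ∈ T, (miss c).card ≤ B.card := by
    intro c hc
    refine Finset.card_le_card_of_injOn (fun x => x + c) ?_ ?_
    · intro x hx
      have hx : x ∈ miss c := hx
      rw [Finset.mem_filter] at hx
      exact (hTT x hx.1 c hc).resolve_left hx.2
    · intro x _ y _ h
      exact add_right_cancel h
  have hm2 : ∀ a b, (miss (a + b)).card ≤ (miss a).card + (miss b).card := by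
    intro a b
    have hsub : miss (a + b) ⊆ miss a ∪ (miss b).image (fun x => x + a) := by
      intro x hx
      rw [Finset.mem_filter] at hx
      rw [Finset.mem_union]
      by_cases h : x + a ∈ T
      · right
        rw [Finset.mem_image]
        refine ⟨x + a, ?_, add_add_self' _ _⟩
        rw [Finset.mem_filter]
        exact ⟨h, by rw [add_assoc]; exact hx.2⟩
      · left
        rw [Finset.mem_filter]
        exact ⟨hx.1, h⟩
    refine (Finset.card_le_card hsub).trans ((Finset.card_union_le _ _).trans ?_)
    exact Nat.add_le_add_left Finset.card_image_le _
  have hm3 : ∀ c d, (miss c).card + (miss d).card < T.card → ∃ x ∈ T, x + c ∈ T ∧ x + d ∈ T := by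
    intro c d h
    by_contra hcon
    push Not at hcon
    have hsub : T ⊆ miss c ∪ miss d := by
      intro x hx
      rw [Finset.mem_union, Finset.mem_filter, Finset.mem_filter]
      by_cases h : x + c ∈ T
      · exact Or.inr ⟨hx, hcon x hx h⟩
      · exact Or.inl ⟨hx, h⟩
    have := (Finset.card_le_card hsub).trans (Finset.card_union_le _ _)
    omega
  obtain ⟨t, ht⟩ : T.Nonempty := Finset.card_pos.1 (by omega)
  let F : Submodule (ZMod 2) V :=
    { carrier := {c | ∃ a ∈ T, ∃ b ∈ T, c = a + b}
      zero_mem' := ⟨t, ht, t, ht, (ZModModule.add_self t).symm⟩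
      add_mem' := by
        rintro _ _ ⟨a, ha, b, hb, rfl⟩ ⟨a', ha', b', hb', rfl⟩
        obtain ⟨x, hx, h1, h2⟩ := hm3 (a + b) (a' + b') (by
          have := hm2 a b
          have := hm2 a' b'
          have := hm1 a ha
          have := hm1 b hb
          have := hm1 a' ha'
          have := hm1 b' hb'
          omega)
        refine ⟨_, h1, _, h2, ?_⟩
        rw [add_add_add_comm x, ZModModule.add_self x, zero_add]
      smul_mem' := by
        rintro c _ ⟨a, ha, b, hb, rfl⟩
        rcases zmod2_cases c with rfl | rfl
        · exact ⟨t, ht, t, ht, by rw [zero_smul, ZModModule.add_self]⟩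
        · exact ⟨a, ha, b, hb, by rw [one_smul]⟩ }
  refine ⟨F, ?_, ?_⟩
  · intro c hc
    obtain ⟨x, hx, h1, _⟩ := hm3 c c (by have := hm1 c hc; omega)
    refine ⟨x, hx, x + c, h1, ?_⟩
    rw [← add_assoc, ZModModule.add_self, zero_add]
  · rintro _ ⟨a, ha, b, hb, rfl⟩
    exact hTT a ha b hb

lemma stability (k s : ℕ) (ε : ℝ) (hε : 0 < ε) : ∃ n₀ : ℕ, ∀ (V : Type) [AddCommGroup V]
    [Module (ZMod 2) V] [Fintype V], n₀ ≤ Module.finrank (ZMod 2) V → ∀ M : Set V,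
    ¬ HasBB (k+1) s M → 2 ^ k * ∑ y, zc M y ≤ Fintype.card V →
    ∃ F : Submodule (ZMod 2) V, Module.finrank (ZMod 2) F + k = Module.finrank (ZMod 2) V ∧
      ∑ y, (if y ∈ F then 0 else zc M y) ≤ ε * Fintype.card V := by
  have hk : (1:ℝ) ≤ 2 ^ k := one_le_pow₀ (by norm_num)
  have hs : (1:ℝ) ≤ 2 ^ s := one_le_pow₀ (by norm_num)
  obtain ⟨η, hη0, hη1, hη2⟩ : ∃ η : ℝ, 0 < η ∧ 2 ^ k * (2 ^ s * η) ≤ 1 / 4 ∧ 2 ^ k * η ≤ ε / 4 := by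
    refine ⟨min (1 / (4 * 2 ^ k * 2 ^ s)) (ε / (4 * 2 ^ k)), by positivity, ?_, ?_⟩
    · calc (2:ℝ) ^ k * (2 ^ s * min (1 / (4 * 2 ^ k * 2 ^ s)) (ε / (4 * 2 ^ k)))
          ≤ 2 ^ k * (2 ^ s * (1 / (4 * 2 ^ k * 2 ^ s))) := by gcongr; exact min_le_left _ _
        _ = 1 / 4 := by field_simp
    · calc (2:ℝ) ^ k * min (1 / (4 * 2 ^ k * 2 ^ s)) (ε / (4 * 2 ^ k))
          ≤ 2 ^ k * (ε / (4 * 2 ^ k)) := by gcongr; exact min_le_right _ _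
        _ = ε / 4 := by field_simp
  have hη3 : 2 ^ k * η ≤ 1 / 4 := by
    refine le_trans ?_ hη1
    gcongr
    nlinarith
  obtain ⟨β, hβ0, hβ1, hβ2⟩ : ∃ β : ℝ, 0 < β ∧ 2 ^ k * β ≤ 1 / 8 ∧ β ≤ ε / 4 := by
    refine ⟨min (1 / (8 * 2 ^ k)) (ε / 4), by positivity, ?_, min_le_right _ _⟩
    calc (2:ℝ) ^ k * min (1 / (8 * 2 ^ k)) (ε / 4)
          ≤ 2 ^ k * (1 / (8 * 2 ^ k)) := by gcongr; exact min_le_left _ _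
        _ = 1 / 8 := by field_simp
  have hβ3 : β ≤ 1 / 8 := by nlinarith
  obtain ⟨δ, hδ0, hδ1, hδ2⟩ : ∃ δ : ℝ, 0 < δ ∧ 2 * δ * 2 ^ (k+1) ≤ η ∧ δ ≤ 1 := by
    have : η ≤ 1/4 := by nlinarith
    refine ⟨η / (2 * 2 ^ (k+1)), by positivity, le_of_eq (by field_simp), ?_⟩
    rw [div_le_one (by positivity), pow_succ]
    linarith
  set δ₁ := δ * β with hδ₁
  have hδ₁0 : 0 < δ₁ := by positivity
  have hδ₁β : δ₁ ≤ β := by nlinarith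
  have hδ₁δ : δ₁ ≤ δ := by nlinarith
  obtain ⟨m, hm⟩ := affine_density' s δ₁ hδ₁0
  have hm : AffDens s m δ₁ := hm
  obtain ⟨n₀, hn₀⟩ := erdos_stone k m
  refine ⟨n₀, ?_⟩
  intro V _ _ _ hn M hno hM
  obtain ⟨L, ι, hι, hL⟩ := hn₀ V hn M hM
  have hv : Valid M L ι := ⟨hι, hL⟩
  have hcV : (0:ℝ) < Fintype.card V := by exact_mod_cast Fintype.card_pos
  set v : ℝ := (Fintype.card V : ℝ) with hvdef
  let T : Finset V := Finset.univ.filter (fun x => ∀ w, w ≠ 0 → dens M ι (x + L w) ≤ η)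
  let B : Finset V := Finset.univ.filter (fun y => 1 + δ < ∑ a, dens M ι (y + L a))
  have memT : ∀ x, x ∈ T ↔ ∀ w, w ≠ 0 → dens M ι (x + L w) ≤ η := by intro x; simp [T]
  have memB : ∀ y, y ∈ B ↔ 1 + δ < ∑ a, dens M ι (y + L a) := by intro x; simp [B]
  -- density on T
  have hdT : ∀ x ∈ T, 1 - δ₁ - 2 ^ k * η ≤ dens M ι x := by
    intro x hx
    rw [memT] at hx
    have h1 := lem_i hv hm hno x
    rw [← Finset.add_sum_erase _ _ (Finset.mem_univ (0 : QQ k))] at h1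
    have h2 : ∑ a ∈ Finset.univ.erase (0 : QQ k), dens M ι (x + L a) ≤ 2 ^ k * η := by
      refine (Finset.sum_le_card_nsmul _ _ η ?_).trans ?_
      · intro a ha
        exact hx a (Finset.ne_of_mem_erase ha)
      · rw [nsmul_eq_mul]
        gcongr
        refine (Nat.cast_le.2 (Finset.card_le_univ _)).trans ?_
        simp [ZMod.card]
    rw [map_zero, add_zero] at h1
    linarith
  -- good
  have hgood : ∀ y, y ∉ B → ∃ u, y + L u ∈ T := by
    intro y hy
    rw [memB, not_lt] at hy
    obtain ⟨u, hu⟩ := lem_good hv hm hno y (by linarith) hδ₁δ hδ1 hy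
    exact ⟨u, (memT _).2 hu⟩
  -- size of B
  have hB : (B.card : ℝ) ≤ β * v := by
    have h1 : ∀ y, (1 - δ₁) + (if y ∈ B then δ else 0) ≤ ∑ a, dens M ι (y + L a) := by
      intro y
      split_ifs with h
      · rw [memB] at h; linarith
      · have := lem_i hv hm hno y; linarith
    have h2 := Finset.sum_le_sum (s := Finset.univ) fun y _ => h1 y
    rw [sum_dens, Finset.sum_add_distrib] at h2
    simp only [Finset.sum_const, nsmul_eq_mul, Finset.card_univ, Finset.sum_ite_mem, Finset.univ_inter] at h2
    have h3 : (B.card : ℝ) * δ ≤ (β * v) * δ := by rw [hδ₁] at h2; nlinarith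
    exact le_of_mul_le_mul_right h3 hδ0
  -- uniqueness
  have huniq : ∀ x ∈ T, ∀ w, x + L w ∈ T → w = 0 := by
    intro x hx w hw
    by_contra hne
    have h1 := (memT x).1 hx w hne
    have h2 := hdT _ hw
    nlinarith
  have hT1 : (2:ℝ) ^ k * T.card ≤ v := by
    have := Finset.card_le_card_of_injOn (s := T ×ˢ (Finset.univ : Finset (QQ k))) (t := (Finset.univ : Finset V))
      (fun p => p.1 + L p.2) (fun _ _ => Finset.mem_coe.2 (Finset.mem_univ _)) (by
        rintro ⟨x, w⟩ hx ⟨x', w'⟩ hx' h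
        simp only [Finset.coe_product, Set.mem_prod, Finset.mem_coe, Finset.mem_univ, and_true] at hx hx'
        simp only at h
        have h3 : x + L (w + w') = x' := by
          rw [map_add, ← add_assoc, h, add_add_self']
        have h4 := huniq x hx (w + w') (by rw [h3]; exact hx')
        have h5 : w = w' := by
          rw [← ZModModule.neg_eq_self w']; exact eq_neg_of_add_eq_zero_left h4
        rw [h4, map_zero, add_zero] at h3
        rw [h3, h5])
    rw [Finset.card_product] at this
    simp only [Finset.card_univ, Fintype.card_fun, ZMod.card, Fintype.card_fin] at this
    rw [mul_comm, hvdef]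
    exact_mod_cast this
  have hT2 : v - B.card ≤ 2 ^ k * T.card := by
    have hsub : (Finset.univ : Finset V) ⊆ B ∪ (T ×ˢ (Finset.univ : Finset (QQ k))).image (fun p => p.1 + L p.2) := by
      intro y _
      rw [Finset.mem_union]
      by_cases hy : y ∈ B
      · exact Or.inl hy
      · right
        obtain ⟨u, hu⟩ := hgood y hy
        rw [Finset.mem_image]
        exact ⟨(y + L u, u), by simp [hu], add_add_self' _ _⟩
    have := (Finset.card_le_card hsub).trans ((Finset.card_union_le _ _).trans (Nat.add_le_add_left Finset.card_image_le _))
    rw [Finset.card_product] at this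
    simp only [Finset.card_univ, Fintype.card_fun, ZMod.card, Fintype.card_fin] at this
    have h2 : v ≤ B.card + T.card * 2 ^ k := by rw [hvdef]; exact_mod_cast this
    linarith
  have hTT : ∀ x ∈ T, ∀ y ∈ T, x + y ∈ T ∨ x + y ∈ B := by
    intro x hx y hy
    by_contra hcon
    push Not at hcon
    obtain ⟨u, hu⟩ := hgood _ hcon.2
    by_cases hu0 : u = 0
    · rw [hu0, map_zero, add_zero] at hu
      exact hcon.1 hu
    · refine hno (lem_triple hv hm.1 hη1 hu0 ((memT x).1 hx) ((memT y).1 hy) ?_)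
      intro w hw
      have := (memT _).1 hu (w + u) (by
        intro h; apply hw; rw [← ZModModule.neg_eq_self u]; exact eq_neg_of_add_eq_zero_left h)
      convert this using 2
      rw [map_add, add_assoc (x + y), add_comm (L w), ← add_assoc (L u), ZModModule.add_self, zero_add]
  have hkT : 4 * B.card < T.card := by
    have : (4 * B.card : ℝ) < T.card := by
      have h1 : (2:ℝ) ^ k * (4 * B.card) < 2 ^ k * T.card := by
        have : (2:ℝ)^k * B.card ≤ 1/8 * v := by
          calc (2:ℝ)^k * B.card ≤ 2 ^ k * (β * v) := by gcongr
            _ = (2 ^ k * β) * v := by ring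
            _ ≤ 1/8 * v := by gcongr
        nlinarith
      exact lt_of_mul_lt_mul_left h1 (by positivity)
    exact_mod_cast this
  obtain ⟨F, hTF, hFT⟩ := near_subspace T B hTT hkT
  refine ⟨F, ?_, ?_⟩
  · -- dimension
    let FF : Finset V := Finset.univ.filter (fun x => x ∈ F)
    have hFF1 : T.card ≤ FF.card := Finset.card_le_card fun x hx => by simp [FF, hTF x hx]
    have hFF2 : FF.card ≤ T.card + B.card := by
      refine (Finset.card_le_card (t := T ∪ B) fun x hx => ?_).trans (Finset.card_union_le _ _)
      rw [Finset.mem_union]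
      exact hFT x (by simpa [FF] using hx)
    have hFF3 : FF.card = 2 ^ Module.finrank (ZMod 2) F := by
      have := Module.card_eq_pow_finrank (K := ZMod 2) (V := F)
      rw [ZMod.card] at this
      rw [← this, Fintype.card_subtype]
    have hV : Fintype.card V = 2 ^ Module.finrank (ZMod 2) V := by
      have := Module.card_eq_pow_finrank (K := ZMod 2) (V := V)
      rwa [ZMod.card] at this
    have hBk : (2:ℝ)^k * B.card ≤ 1/8 * v := by
      calc (2:ℝ)^k * B.card ≤ 2 ^ k * (β * v) := by gcongr
        _ = (2 ^ k * β) * v := by ring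
        _ ≤ 1/8 * v := by gcongr
    have a1 : (T.card : ℝ) ≤ FF.card := by exact_mod_cast hFF1
    have a2 : (FF.card : ℝ) ≤ T.card + B.card := by exact_mod_cast hFF2
    have b1 : v < 2 * (2 ^ k * FF.card) := by
      have : (2:ℝ)^k * T.card ≤ 2 ^ k * FF.card := by gcongr
      nlinarith
    have b2 : 2 ^ k * (FF.card : ℝ) < 2 * v := by
      have : (2:ℝ)^k * FF.card ≤ 2 ^ k * (T.card + B.card) := by gcongr
      nlinarith
    rw [hFF3, hvdef, hV] at b1 b2
    have c1 : 2 ^ (Module.finrank (ZMod 2) V) < 2 ^ (Module.finrank (ZMod 2) F + k + 1) := by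
      have : 2 ^ (Module.finrank (ZMod 2) V) < 2 * (2 ^ k * 2 ^ (Module.finrank (ZMod 2) F)) := by exact_mod_cast b1
      rw [pow_succ, pow_add]; linarith
    have c2 : 2 ^ (Module.finrank (ZMod 2) F + k) < 2 ^ (Module.finrank (ZMod 2) V + 1) := by
      have : 2 ^ k * 2 ^ (Module.finrank (ZMod 2) F) < 2 * 2 ^ (Module.finrank (ZMod 2) V) := by exact_mod_cast b2
      rw [pow_succ, pow_add]; linarith
    have d1 := (Nat.pow_lt_pow_iff_right (by norm_num)).1 c1
    have d2 := (Nat.pow_lt_pow_iff_right (by norm_num)).1 c2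
    omega
  · have hZT : (1 - δ₁ - 2 ^ k * η) * T.card ≤ ∑ x ∈ T, zc M x := by
      have h1 : ∑ x ∈ T, dens M ι x = ∑ x ∈ T, zc M x := by
        unfold dens
        rw [← Finset.sum_div, Finset.sum_comm]
        have : ∀ e, ∑ x ∈ T, zc M (x + ι e) = ∑ x ∈ T, zc M x := by
          intro e
          refine Finset.sum_bij' (fun x _ => x + ι e) (fun x _ => x + ι e) ?_ ?_ ?_ ?_ ?_
          · intro x hx
            rw [memT] at hx ⊢
            intro w hw
            rw [add_right_comm, dens_shift]; exact hx w hw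
          · intro x hx
            rw [memT] at hx ⊢
            intro w hw
            rw [add_right_comm, dens_shift]; exact hx w hw
          · intro x _; exact add_add_self' _ _
          · intro x _; exact add_add_self' _ _
          · intro x _; rfl
        simp only [this, Finset.sum_const, nsmul_eq_mul,
          Finset.card_univ, Fintype.card_fun, ZMod.card, Fintype.card_fin]
        push_cast
        field_simp
      rw [← h1]
      have := Finset.card_nsmul_le_sum T (fun x => dens M ι x) _ hdT
      rw [nsmul_eq_mul] at this
      linarith
    have h2 : ∑ y, (if y ∈ F then 0 else zc M y) ≤ ∑ y, zc M y - ∑ x ∈ T, zc M x := by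
      have : ∑ x ∈ T, zc M x = ∑ x, if x ∈ T then zc M x else 0 := by
        rw [Finset.sum_ite_mem, Finset.univ_inter]
      rw [this, ← Finset.sum_sub_distrib]
      refine Finset.sum_le_sum fun y _ => ?_
      have := zc_nonneg M y
      by_cases h : y ∈ T
      · simp [h, hTF y h]
      · simp only [h, if_false, sub_zero]
        split_ifs <;> linarith
    refine h2.trans ?_
    have hBv : v - β * v ≤ 2 ^ k * T.card := by linarith
    have h3 : (2:ℝ) ^ k * (∑ y, zc M y - ∑ x ∈ T, zc M x) ≤ 2 ^ k * (ε * v) := by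
      have h4 : 2 ^ k * ((1 - δ₁ - 2 ^ k * η) * T.card) ≤ 2 ^ k * ∑ x ∈ T, zc M x := by gcongr
      have h5 : (1 - δ₁ - 2 ^ k * η) * (v - β * v) ≤ (1 - δ₁ - 2 ^ k * η) * (2 ^ k * T.card) := by
        apply mul_le_mul_of_nonneg_left hBv; linarith
      have h6 : (1 - ε) * v ≤ (1 - δ₁ - 2 ^ k * η) * (v - β * v) := by
        have : 1 - ε ≤ (1 - δ₁ - 2 ^ k * η) * (1 - β) := by
          have : 0 ≤ (δ₁ + 2 ^ k * η) * β := by positivity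
          nlinarith
        calc (1 - ε) * v ≤ ((1 - δ₁ - 2 ^ k * η) * (1 - β)) * v := by gcongr
          _ = _ := by ring
      have h7 : ε * v ≤ 2 ^ k * (ε * v) := le_mul_of_one_le_left (by positivity) hk
      nlinarith
    exact le_of_mul_le_mul_left h3 (by positivity)

end Stab

section Final

lemma exists_inj_gen {A B : Type} [AddCommGroup A] [Module (ZMod 2) A] [Finite A]
    [AddCommGroup B] [Module (ZMod 2) B] [Finite B]
    (h : Module.finrank (ZMod 2) A ≤ Module.finrank (ZMod 2) B) :
    ∃ g : A →ₗ[ZMod 2] B, Function.Injective g := by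
  have := Fintype.ofFinite B
  have : Module.Finite (ZMod 2) A := Module.Finite.of_finite
  obtain ⟨ι, hι⟩ := exists_inj _ h
  let e : A ≃ₗ[ZMod 2] QQ (Module.finrank (ZMod 2) A) := LinearEquiv.ofFinrankEq _ _ (by simp)
  exact ⟨ι ∘ₗ e.toLinearMap, hι.comp e.injective⟩

lemma ext_inj {X A B : Type} [AddCommGroup X] [Module (ZMod 2) X]
    [AddCommGroup A] [Module (ZMod 2) A] [Finite A]
    [AddCommGroup B] [Module (ZMod 2) B] [Finite B]
    (h : Module.finrank (ZMod 2) A ≤ Module.finrank (ZMod 2) B)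
    (θ : X →ₗ[ZMod 2] A) (hθ : Function.Injective θ) (ψ : X →ₗ[ZMod 2] B)
    (hψ : Function.Injective ψ) :
    ∃ g : A →ₗ[ZMod 2] B, Function.Injective g ∧ ∀ x, g (θ x) = ψ x := by
  have : Module.Finite (ZMod 2) A := Module.Finite.of_finite
  have : Module.Finite (ZMod 2) B := Module.Finite.of_finite
  obtain ⟨r, hr⟩ := LinearMap.exists_leftInverse_of_injective θ (LinearMap.ker_eq_bot.2 hθ)
  obtain ⟨r₂, hr₂⟩ := LinearMap.exists_leftInverse_of_injective ψ (LinearMap.ker_eq_bot.2 hψ)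
  have hr' : ∀ x, r (θ x) = x := fun x => LinearMap.congr_fun hr x
  have hr₂' : ∀ x, r₂ (ψ x) = x := fun x => LinearMap.congr_fun hr₂ x
  have s1 : LinearMap.range r = ⊤ := LinearMap.range_eq_top.2 fun x => ⟨_, hr' x⟩
  have s2 : LinearMap.range r₂ = ⊤ := LinearMap.range_eq_top.2 fun x => ⟨_, hr₂' x⟩
  have d1 := LinearMap.finrank_range_add_finrank_ker r
  have d2 := LinearMap.finrank_range_add_finrank_ker r₂
  rw [s1] at d1
  rw [s2] at d2
  obtain ⟨q, hq⟩ := exists_inj_gen (A := LinearMap.ker r) (B := LinearMap.ker r₂) (by omega)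
  let c : A →ₗ[ZMod 2] LinearMap.ker r := (LinearMap.id - θ ∘ₗ r).codRestrict _ (by
    intro a; simp [hr'])
  have hc : ∀ a, (c a : A) = a - θ (r a) := fun a => rfl
  refine ⟨ψ ∘ₗ r + (LinearMap.ker r₂).subtype ∘ₗ q ∘ₗ c, ?_, ?_⟩
  · rw [injective_iff_map_eq_zero]
    intro a ha
    simp only [LinearMap.add_apply, LinearMap.comp_apply, Submodule.subtype_apply] at ha
    have h1 := congrArg r₂ ha
    rw [map_add, hr₂', LinearMap.mem_ker.1 (q (c a)).2, add_zero, map_zero] at h1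
    rw [h1, map_zero, zero_add] at ha
    have h2 : c a = 0 := (injective_iff_map_eq_zero q).1 hq _ (Subtype.ext ha)
    have h3 := hc a
    rw [h2, h1, map_zero, sub_zero] at h3
    exact h3.symm
  · intro x
    have : c (θ x) = 0 := Subtype.ext (by rw [hc, hr', sub_self]; rfl)
    simp [this, hr']

lemma exists_proj {V : Type} [AddCommGroup V] [Module (ZMod 2) V] [Finite V] {k : ℕ}
    (F : Submodule (ZMod 2) V)
    (hF : Module.finrank (ZMod 2) F + k = Module.finrank (ZMod 2) V) :
    ∃ π : V →ₗ[ZMod 2] QQ k, Function.Surjective π ∧ ∀ x, π x = 0 ↔ x ∈ F := by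
  have : Module.Finite (ZMod 2) V := Module.Finite.of_finite
  have h := Submodule.finrank_quotient_add_finrank F
  let e : (V ⧸ F) ≃ₗ[ZMod 2] QQ k := LinearEquiv.ofFinrankEq _ _ (by simp; omega)
  refine ⟨e.toLinearMap ∘ₗ F.mkQ, e.surjective.comp F.mkQ_surjective, fun x => ?_⟩
  simp

lemma core {d n k : ℕ} {ε : ℝ} {N : Set (QQ d)} {M : Set (QQ n)} (h0 : 0 ∉ M)
    (F' : Submodule (ZMod 2) (QQ d)) (hF' : Module.finrank (ZMod 2) F' + k = d)
    (F : Submodule (ZMod 2) (QQ n)) (hF : Module.finrank (ZMod 2) F + k = n) (hdn : d ≤ n)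
    (hM : ∑ y, (if y ∈ F then 0 else zc M y) ≤ ε * 2 ^ n) (hε : 2 ^ d * 2 ^ k * ε < 1)
    {X : Type} [AddCommGroup X] [Module (ZMod 2) X]
    (θ : X →ₗ[ZMod 2] QQ d) (hθ : Function.Injective θ) (hθF : ∀ x, θ x ∈ F')
    (ψ : X →ₗ[ZMod 2] QQ n) (hψ : Function.Injective ψ) (hψF : ∀ x, ψ x ∈ F)
    (hN : ∀ y ∈ N, y ∈ F' → ∃ x, θ x = y ∧ ψ x ∈ M) : HasRestriction N M := by
  obtain ⟨π, hπs, hπ⟩ := exists_proj (k := k) F (by simpa using hF)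
  obtain ⟨π', hπs', hπ'⟩ := exists_proj (k := k) F' (by simpa using hF')
  obtain ⟨g, hg, hgθ⟩ := ext_inj (A := F') (B := F) (by omega)
    (θ.codRestrict F' hθF) (fun a b h => hθ (congrArg Subtype.val h))
    (ψ.codRestrict F hψF) (fun a b h => hψ (congrArg Subtype.val h))
  obtain ⟨p, hp⟩ := LinearMap.exists_leftInverse_of_injective F'.subtype (by simp)
  have hp' : ∀ (x) (hx : x ∈ F'), p x = ⟨x, hx⟩ := fun x hx => LinearMap.congr_fun hp ⟨x, hx⟩
  obtain ⟨σ, hσ⟩ := LinearMap.exists_rightInverse_of_surjective π (LinearMap.range_eq_top.2 hπs)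
  have hσ' : ∀ v, π (σ v) = v := fun v => LinearMap.congr_fun hσ v
  have : Finite (QQ k →ₗ[ZMod 2] F) := DFunLike.finite _
  have : Fintype (QQ k →ₗ[ZMod 2] F) := Fintype.ofFinite _
  let Ψ : (QQ k →ₗ[ZMod 2] F) → (QQ d →ₗ[ZMod 2] QQ n) := fun R =>
    F.subtype ∘ₗ g ∘ₗ p + σ ∘ₗ π' + F.subtype ∘ₗ R ∘ₗ π'
  have hΨ : ∀ R x, Ψ R x = (g (p x) : QQ n) + σ (π' x) + (R (π' x) : QQ n) := fun R x => rfl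
  set H : ℝ := (Fintype.card (QQ k →ₗ[ZMod 2] F) : ℝ) with hH
  have hHpos : 0 < H := by rw [hH]; exact_mod_cast Fintype.card_pos
  have hcF : (Fintype.card F : ℝ) * 2 ^ k = 2 ^ n := by
    have := Module.card_eq_pow_finrank (K := ZMod 2) (V := F)
    rw [ZMod.card] at this
    rw [this]; push_cast
    rw [← pow_add, hF]
  have hnotin : ∀ R x, x ∉ F' → Ψ R x ∉ F := by
    intro R x hx hin
    apply hx
    rw [← hπ']
    rw [← hπ, hΨ, map_add, map_add, (hπ _).2 (g (p x)).2, (hπ _).2 (R (π' x)).2, hσ', zero_add, add_zero] at hin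
    exact hin
  have hcount : ∀ x, x ∉ F' → ∑ R, zc M (Ψ R x) ≤ H * (2 ^ k * ε) := by
    intro x hx
    obtain ⟨l, hl⟩ := exists_func (w := π' x) (fun h => hx ((hπ' x).1 h))
    have h1 : ∀ f : F, ∑ R, zc M (Ψ R x + f) = ∑ R, zc M (Ψ R x) := by
      intro f
      rw [← Equiv.sum_comp (Equiv.addRight (l.smulRight f)) (fun R => zc M (Ψ R x))]
      refine Finset.sum_congr rfl fun R _ => ?_
      congr 1
      rw [hΨ, hΨ]
      simp [hl, add_assoc]
    have h2 : ∀ z, z ∉ F → ∑ f : F, zc M (z + f) ≤ ε * 2 ^ n := by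
      intro z hz
      refine le_trans ?_ hM
      have : ∀ f : F, zc M (z + f) = (fun y => if y ∈ F then 0 else zc M y) (z + f) := by
        intro f
        have : z + f ∉ F := fun h => hz ((F.add_mem_iff_left f.2).1 h)
        simp [this]
      rw [Finset.sum_congr rfl fun f _ => this f]
      rw [← Finset.sum_image (s := (Finset.univ : Finset F)) (g := fun f : F => z + (f : QQ n))
        (f := fun y => if y ∈ F then 0 else zc M y) (fun a _ b _ h => Subtype.ext (add_left_cancel h))]
      refine Finset.sum_le_sum_of_subset_of_nonneg (Finset.subset_univ _) fun y _ _ => ?_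
      split_ifs
      · exact le_rfl
      · exact zc_nonneg _ _
    have h3 : ∑ f : F, ∑ R, zc M (Ψ R x + f) ≤ H * (ε * 2 ^ n) := by
      rw [Finset.sum_comm]
      refine (Finset.sum_le_card_nsmul _ _ (ε * 2 ^ n) fun R _ => h2 _ (hnotin R x hx)).trans ?_
      rw [nsmul_eq_mul, Finset.card_univ]
    simp only [h1, Finset.sum_const, nsmul_eq_mul, Finset.card_univ] at h3
    rw [← hcF] at h3
    have hcFpos : (0:ℝ) < Fintype.card F := by exact_mod_cast Fintype.card_pos
    refine le_of_mul_le_mul_left (h3.trans (le_of_eq ?_)) hcFpos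
    ring
  have hε0 : 0 ≤ ε := by
    have : 0 ≤ ε * 2 ^ n := le_trans (Finset.sum_nonneg fun y _ => by
      split_ifs
      · exact le_rfl
      · exact zc_nonneg _ _) hM
    exact nonneg_of_mul_nonneg_left this (by positivity)
  have hR : ∃ R, ∀ x, x ∉ F' → Ψ R x ∈ M := by
    by_contra hcon
    push Not at hcon
    have h1 : ∀ R, 1 ≤ ∑ x, (if x ∈ F' then 0 else zc M (Ψ R x)) := by
      intro R
      obtain ⟨x, hx, hxM⟩ := hcon R
      refine le_trans (le_of_eq ?_) (Finset.single_le_sum (f := fun x => if x ∈ F' then 0 else zc M (Ψ R x)) (fun i _ => ?_) (Finset.mem_univ x))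
      · simp [hx, zc, hxM]
      · split_ifs
        · exact le_rfl
        · exact zc_nonneg _ _
    have h2 := Finset.sum_le_sum (s := Finset.univ) fun R _ => h1 R
    rw [Finset.sum_comm] at h2
    have h3 : ∑ x, ∑ R, (if x ∈ F' then 0 else zc M (Ψ R x)) ≤ 2 ^ d * (H * (2 ^ k * ε)) := by
      refine (Finset.sum_le_card_nsmul _ _ (H * (2 ^ k * ε)) fun x _ => ?_).trans ?_
      · by_cases hx : x ∈ F'
        · simp [hx]; positivity
        · simp only [hx, if_false]; exact hcount x hx
      · rw [nsmul_eq_mul]; simp [ZMod.card]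
    simp only [Finset.sum_const, nsmul_eq_mul, Finset.card_univ, mul_one] at h2
    nlinarith
  obtain ⟨R, hR⟩ := hR
  have hin : ∀ x (hx : x ∈ F'), Ψ R x = g ⟨x, hx⟩ := by
    intro x hx
    rw [hΨ, (hπ' x).2 hx, map_zero, map_zero, hp' x hx]; simp
  refine ⟨Ψ R, ?_, ?_⟩
  · rw [injective_iff_map_eq_zero]
    intro x hx
    by_cases h : x ∈ F'
    · rw [hin x h] at hx
      have := (injective_iff_map_eq_zero g).1 hg _ (Subtype.ext hx)
      exact congrArg Subtype.val this
    · exact absurd (hx ▸ hR x h) h0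
  · rintro _ ⟨y, hy, rfl⟩
    by_cases h : y ∈ F'
    · obtain ⟨x, hx, hxM⟩ := hN y hy h
      rw [hin y h]
      have : (⟨y, h⟩ : F') = θ.codRestrict F' hθF x := Subtype.ext hx.symm
      rw [this, hgθ]
      exact hxM
    · exact hR y h

lemma critNum_le' {n c : ℕ} {M : Set (QQ n)} (φ : QQ n →ₗ[ZMod 2] QQ c) (h : ∀ x ∈ M, φ x ≠ 0) :
    critNum M ≤ c := Nat.sInf_le ⟨φ, h⟩

lemma critNum_spec {n k : ℕ} {M : Set (QQ n)} (h0 : 0 ∉ M) (hk : critNum M ≤ k) :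
    ∃ φ : QQ n →ₗ[ZMod 2] QQ k, ∀ x ∈ M, φ x ≠ 0 := by
  have : critNum M ∈ {c | ∃ φ : QQ n →ₗ[ZMod 2] QQ c, ∀ x ∈ M, φ x ≠ 0} :=
    Nat.sInf_mem ⟨n, LinearMap.id, fun x hx h => h0 (by simpa using (show x = 0 from h) ▸ hx)⟩
  obtain ⟨φ, hφ⟩ := this
  obtain ⟨ι, hι⟩ := exists_inj (critNum M) (V := QQ k) (by simpa using hk)
  refine ⟨ι ∘ₗ φ, fun x hx h => hφ x hx ?_⟩
  exact (injective_iff_map_eq_zero ι).1 hι _ h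

lemma critNum_le_dim {n : ℕ} {M : Set (QQ n)} (h0 : 0 ∉ M) : critNum M ≤ n :=
  critNum_le' LinearMap.id fun x hx h => h0 (by simpa using (show x = 0 from h) ▸ hx)

lemma le_exNumFam {𝒩 : Set (Σ k : ℕ, Set (Fin k → ZMod 2))} {n : ℕ} {M : Set (QQ n)}
    (h0 : 0 ∉ M) (h : ∀ N ∈ 𝒩, ¬ HasRestriction N.2 M) : M.ncard ≤ exNumFam 𝒩 n := by
  refine le_csSup ⟨Nat.card (QQ n), ?_⟩ ⟨M, h0, h, rfl⟩
  rintro _ ⟨M', _, _, rfl⟩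
  rw [← Set.ncard_univ]
  exact Set.ncard_le_ncard (Set.subset_univ _)

lemma exists_sub_finrank {V : Type} [AddCommGroup V] [Module (ZMod 2) V] [Finite V]
    (G : Submodule (ZMod 2) V) {r : ℕ} (h : r ≤ Module.finrank (ZMod 2) G) :
    ∃ F ≤ G, Module.finrank (ZMod 2) F = r := by
  have := Fintype.ofFinite G
  obtain ⟨ι, hι⟩ := exists_inj r h
  refine ⟨LinearMap.range (G.subtype ∘ₗ ι), ?_, ?_⟩
  · rintro _ ⟨x, rfl⟩
    exact (ι x).2
  · rw [LinearMap.finrank_range_of_inj (Subtype.val_injective.comp hι)]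
    simp

lemma ncard_sub {n : ℕ} (F : Submodule (ZMod 2) (QQ n)) :
    (F : Set (QQ n)).ncard = 2 ^ Module.finrank (ZMod 2) F := by
  have := Module.card_eq_pow_finrank (K := ZMod 2) (V := F)
  rw [ZMod.card] at this
  rw [← this, ← Nat.card_coe_set_eq, ← Nat.card_eq_fintype_card]
  rfl

lemma ncard_compl_sub {n k : ℕ} (F : Submodule (ZMod 2) (QQ n))
    (hF : Module.finrank (ZMod 2) F + k = n) :
    {x | x ∉ F}.ncard = 2 ^ n - 2 ^ (n - k) := by
  have h := Set.ncard_add_ncard_compl (F : Set (QQ n))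
  rw [ncard_sub] at h
  have h2 : Nat.card (QQ n) = 2 ^ n := by simp
  have h3 : Module.finrank (ZMod 2) F = n - k := by omega
  rw [h2, h3] at h
  have h4 : {x | x ∉ F} = ((F : Set (QQ n)))ᶜ := rfl
  rw [h4]; omega

lemma sum_zc {n : ℕ} (M : Set (QQ n)) : (M.ncard : ℝ) + ∑ y, zc M y = 2 ^ n := by
  have h := Set.ncard_add_ncard_compl M
  have h2 : Nat.card (QQ n) = 2 ^ n := by simp
  have h3 : ∑ y, zc M y = (Mᶜ.ncard : ℝ) := by
    have : Mᶜ = ((Finset.univ.filter (fun x => x ∉ M) : Finset (QQ n)) : Set (QQ n)) := by ext; simp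
    rw [this, Set.ncard_coe_finset, Finset.card_filter]
    push_cast
    refine Finset.sum_congr rfl fun y _ => ?_
    unfold zc
    by_cases h : y ∈ M <;> simp [h]
  rw [h3]
  rw [h2] at h
  exact_mod_cast h

lemma bb_restriction {d n j : ℕ} {N : Set (QQ d)} {M : Set (QQ n)} (h0 : 0 ∉ M)
    (φ : QQ d →ₗ[ZMod 2] QQ j) (hφ : ∀ x ∈ N, φ x ≠ 0) (h : HasBB j d M) : HasRestriction N M := by
  obtain ⟨L, ι, hι, hL⟩ := h
  refine ⟨L ∘ₗ φ + ι, ?_, ?_⟩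
  · rw [injective_iff_map_eq_zero]
    intro x hx
    by_cases hx0 : φ x = 0
    · simp only [LinearMap.add_apply, LinearMap.comp_apply, hx0, map_zero, zero_add] at hx
      exact (injective_iff_map_eq_zero ι).1 hι _ hx
    · have := hL _ hx0 x
      exact absurd (hx ▸ this) h0
  · rintro _ ⟨x, hx, rfl⟩
    exact hL _ (hφ x hx) x

lemma restriction_image {d n : ℕ} {N : Set (QQ d)} {M : Set (QQ n)} (ρ : QQ d →ₗ[ZMod 2] QQ d)
    (hρ : Function.Injective ρ) (h : HasRestriction (ρ '' N) M) : HasRestriction N M := by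
  obtain ⟨ψ, hψ, hN⟩ := h
  refine ⟨ψ ∘ₗ ρ, hψ.comp hρ, ?_⟩
  rintro _ ⟨x, hx, rfl⟩
  exact hN ⟨_, ⟨x, hx, rfl⟩, rfl⟩

/-- the defining property of the decomposition family -/
def PP (𝒩 : Set (Σ k : ℕ, Set (Fin k → ZMod 2))) (k : ℕ) (D : Σ k : ℕ, Set (Fin k → ZMod 2)) :
    Prop := 0 ∉ D.2 ∧
    (∃ N ∈ 𝒩, ∃ M : Set (Fin N.1 → ZMod 2), IsCopyNnt D.2 N.1 k M ∧ HasRestriction N.2 M)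

lemma HasRestriction.trans' {a b c : ℕ} {A : Set (QQ a)} {B : Set (QQ b)} {C : Set (QQ c)}
    (h1 : HasRestriction A B) (h2 : HasRestriction B C) : HasRestriction A C := by
  obtain ⟨f, hf, hf'⟩ := h1
  obtain ⟨g, hg, hg'⟩ := h2
  refine ⟨g ∘ₗ f, hg.comp hf, ?_⟩
  rintro _ ⟨x, hx, rfl⟩
  exact hg' ⟨_, hf' ⟨x, hx, rfl⟩, rfl⟩

lemma HasRestriction.dim_le {a b : ℕ} {A : Set (QQ a)} {B : Set (QQ b)}
    (h : HasRestriction A B) : a ≤ b := by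
  obtain ⟨f, hf, _⟩ := h
  simpa using LinearMap.finrank_le_finrank_of_injective hf

lemma HasRestriction.ncard_le {a b : ℕ} {A : Set (QQ a)} {B : Set (QQ b)}
    (h : HasRestriction A B) : A.ncard ≤ B.ncard := by
  obtain ⟨f, hf, hAB⟩ := h
  rw [← Set.ncard_image_of_injective A hf]
  exact Set.ncard_le_ncard hAB

lemma HasRestriction.symm' {a b : ℕ} {A : Set (QQ a)} {B : Set (QQ b)}
    (h : HasRestriction A B) (hd : b ≤ a) (hc : B.ncard ≤ A.ncard) : HasRestriction B A := by
  have hab := h.dim_le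
  obtain ⟨f, hf, hAB⟩ := h
  obtain rfl : a = b := le_antisymm hab hd
  let e : QQ a ≃ₗ[ZMod 2] QQ a := LinearEquiv.ofInjectiveEndo f hf
  have he : ∀ x, e x = f x := fun x => rfl
  have heq : f '' A = B := Set.eq_of_subset_of_ncard_le hAB (by
    rw [Set.ncard_image_of_injective A hf]; exact hc)
  refine ⟨e.symm.toLinearMap, e.symm.injective, ?_⟩
  rintro _ ⟨y, hy, rfl⟩
  rw [← heq] at hy
  obtain ⟨x, hx, rfl⟩ := hy
  rw [← he]; simpa using hx

lemma exists_decomp {𝒩 : Set (Σ k : ℕ, Set (Fin k → ZMod 2))} {k : ℕ}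
    {D : Σ k : ℕ, Set (Fin k → ZMod 2)} (hD : PP 𝒩 k D) :
    ∃ D' ∈ decompFam 𝒩 k, HasRestriction D'.2 D.2 := by
  let S : Set ℕ := {m | ∃ D' : Σ k : ℕ, Set (Fin k → ZMod 2), PP 𝒩 k D' ∧ HasRestriction D'.2 D.2 ∧
    D'.1 + D'.2.ncard = m}
  have hS : S.Nonempty := ⟨_, D, hD, ⟨LinearMap.id, fun a b h => h, by simp⟩, rfl⟩
  obtain ⟨D', hP, hR, hm⟩ := Nat.sInf_mem hS
  refine ⟨D', ⟨hP.1, hP.2, ?_⟩, hR⟩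
  intro D'' h0 hP'' hres
  have h1 : sInf S ≤ D''.1 + D''.2.ncard := Nat.sInf_le ⟨D'', ⟨h0, hP''⟩, hres.trans' hR, rfl⟩
  have h2 := hres.dim_le
  have h3 := hres.ncard_le
  exact hres.symm' (by omega) (by omega)

lemma decomp_span {𝒩 : Set (Σ k : ℕ, Set (Fin k → ZMod 2))} {k : ℕ}
    {D : Σ k : ℕ, Set (Fin k → ZMod 2)} (hD : D ∈ decompFam 𝒩 k) :
    Submodule.span (ZMod 2) D.2 = ⊤ := by
  obtain ⟨h0, ⟨N, hN, M, ⟨F, hF, θ, hθ, hθF, rfl⟩, hres⟩, hmin⟩ := hD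
  set U := Submodule.span (ZMod 2) D.2 with hU
  let r := Module.finrank (ZMod 2) U
  let e : QQ r ≃ₗ[ZMod 2] U := LinearEquiv.ofFinrankEq _ _ (by simp [r])
  let i : QQ r →ₗ[ZMod 2] QQ D.1 := U.subtype ∘ₗ e.toLinearMap
  have hi : Function.Injective i := Subtype.val_injective.comp e.injective
  have himg : i '' (i ⁻¹' D.2) = D.2 := by
    rw [Set.image_preimage_eq_iff]
    intro x hx
    have hxU : x ∈ U := Submodule.subset_span hx
    exact ⟨e.symm ⟨x, hxU⟩, by simp [i]⟩
  have himg2 : (θ ∘ₗ i) '' (i ⁻¹' D.2) = θ '' D.2 := by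
    rw [← congrArg (Set.image θ) himg, ← Set.image_comp]; rfl
  have := hmin ⟨r, i ⁻¹' D.2⟩ (by simpa using h0) ⟨N, hN, θ '' D.2 ∪ {x | x ∉ F},
    ⟨F, hF, θ ∘ₗ i, hθ.comp hi, fun x => hθF _, by rw [himg2]⟩, hres⟩ ⟨i, hi, by rw [himg]⟩
  have hd := this.dim_le
  apply Submodule.eq_top_of_finrank_eq
  refine le_antisymm (Submodule.finrank_le _) ?_
  simpa using hd

lemma upper_a {d n k t : ℕ} {ε : ℝ} {N : Set (QQ d)} (hN0 : 0 ∉ N) {M : Set (QQ n)} (h0 : 0 ∉ M)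
    (hkd : k ≤ d) (hdn : d ≤ n) (F : Submodule (ZMod 2) (QQ n))
    (hF : Module.finrank (ZMod 2) F + k = n)
    (hM : ∑ y, (if y ∈ F then 0 else zc M y) ≤ ε * 2 ^ n) (hε : 2 ^ d * 2 ^ k * ε < 1)
    (I : Set (QQ d)) (hI : I ⊆ N) (hIt : I.ncard = t)
    (hIi : LinearIndependent (ZMod 2) ((↑) : I → QQ d)) (hIc : critNum (N \ I) ≤ k)
    (hmin : ∀ I : Set (QQ d), I ⊆ N → LinearIndependent (ZMod 2) ((↑) : I → QQ d) →
      critNum (N \ I) ≤ k → t ≤ I.ncard)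
    (ht : t ≤ Module.finrank (ZMod 2) (Submodule.span (ZMod 2) (M ∩ F))) : HasRestriction N M := by
  obtain ⟨φ, hφ⟩ := critNum_spec (M := N \ I) (fun h => hN0 h.1) hIc
  have hrn := LinearMap.finrank_range_add_finrank_ker φ
  have hrk : Module.finrank (ZMod 2) (LinearMap.range φ) ≤ k := by
    simpa using Submodule.finrank_le (LinearMap.range φ)
  have hfd : Module.finrank (ZMod 2) (QQ d) = d := by simp
  obtain ⟨F', hF'φ, hF'⟩ := exists_sub_finrank (LinearMap.ker φ) (r := d - k) (by omega)
  have hF'k : Module.finrank (ZMod 2) F' + k = d := by omega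
  have hsub : N ∩ F' ⊆ I := by
    rintro x ⟨hx, hxF⟩
    by_contra hxI
    exact hφ x ⟨hx, hxI⟩ (hF'φ hxF)
  obtain ⟨π, -, hπ⟩ := exists_proj (k := k) F' (by omega)
  have hle := hmin (N ∩ F') Set.inter_subset_left (hIi.comp (Set.inclusion hsub) (Set.inclusion_injective hsub))
    (critNum_le' π (fun x hx h => hx.2 ⟨hx.1, (hπ x).1 h⟩))
  have heq : N ∩ F' = I := Set.eq_of_subset_of_ncard_le hsub (by omega)
  obtain ⟨b, hbM, hbs, hbi⟩ := exists_linearIndependent (ZMod 2) (M ∩ F : Set (QQ n))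
  have hbfin : Fintype b := Fintype.ofFinite b
  have hbc : t ≤ Fintype.card b := by
    rw [← hbs] at ht
    have := finrank_span_set_eq_card hbi
    rw [this] at ht
    simpa using ht
  have hIfin : Fintype I := Fintype.ofFinite I
  have hIc' : Fintype.card I = t := by
    rw [← hIt, ← Nat.card_coe_set_eq, Nat.card_eq_fintype_card]
  obtain ⟨emb⟩ := Function.Embedding.nonempty_of_card_le (α := I) (β := b) (by omega)
  have hbi' := hbi.comp emb emb.injective
  refine core h0 F' hF'k F hF hdn hM hε (X := I → ZMod 2)
    (Fintype.linearCombination (ZMod 2) ((↑) : I → QQ d)) ?_ ?_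
    (Fintype.linearCombination (ZMod 2) (fun x : I => (emb x : QQ n))) ?_ ?_ ?_
  · exact linearIndependent_iff_injective_fintypeLinearCombination.1 hIi
  · intro x
    rw [Fintype.linearCombination_apply]
    refine Submodule.sum_mem _ fun i _ => Submodule.smul_mem _ _ ?_
    exact (heq.ge i.2).2
  · exact linearIndependent_iff_injective_fintypeLinearCombination.1 hbi'
  · intro x
    rw [Fintype.linearCombination_apply]
    exact Submodule.sum_mem _ fun i _ => Submodule.smul_mem _ _ (hbM (emb i).2).2
  · intro y hy hyF
    have hyI : y ∈ I := heq ▸ (⟨hy, hyF⟩ : y ∈ N ∩ F')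
    refine ⟨Pi.single ⟨y, hyI⟩ 1, ?_, ?_⟩
    · rw [Fintype.linearCombination_apply_single, one_smul]
    · rw [Fintype.linearCombination_apply_single, one_smul]
      exact (hbM (emb _).2).1

lemma upper_b {𝒩 : Set (Σ k : ℕ, Set (Fin k → ZMod 2))} {n k t : ℕ} {ε : ℝ}
    {M : Set (QQ n)} (h0 : 0 ∉ M)
    (hd : ∀ N ∈ 𝒩, k ≤ N.1 ∧ N.1 ≤ n ∧ (2 : ℝ) ^ N.1 * 2 ^ k * ε < 1)
    (hfree : ∀ N ∈ 𝒩, ¬ HasRestriction N.2 M)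
    (F : Submodule (ZMod 2) (QQ n))
    (hF : Module.finrank (ZMod 2) F + k = n) (htn : t - 1 + k ≤ n)
    (hM : ∑ y, (if y ∈ F then 0 else zc M y) ≤ ε * 2 ^ n)
    (ht : Module.finrank (ZMod 2) (Submodule.span (ZMod 2) (M ∩ F)) < t) :
    (M ∩ F).ncard ≤ exNumFam (decompFam 𝒩 k) (t - 1) := by
  have hXF : Submodule.span (ZMod 2) (M ∩ F) ≤ F := Submodule.span_le.2 fun x hx => hx.2
  obtain ⟨θ, hθ⟩ := exists_inj_gen (A := Submodule.span (ZMod 2) (M ∩ F)) (B := QQ (t - 1))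
    (by simp; omega)
  obtain ⟨g, hg, hgθ⟩ := ext_inj (A := QQ (t - 1)) (B := F) (by simp; omega) θ hθ
    (Submodule.inclusion hXF) (Submodule.inclusion_injective hXF)
  let M0 : Set (QQ (t - 1)) := {x | (g x : QQ n) ∈ M}
  have hc : (M ∩ F).ncard ≤ M0.ncard := by
    rw [← Set.ncard_image_of_injective M0 (f := fun x => (g x : QQ n))
      (Subtype.val_injective.comp hg)]
    refine Set.ncard_le_ncard ?_
    intro x hx
    have hxs := Submodule.subset_span (R := ZMod 2) hx
    have := hgθ ⟨x, hxs⟩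
    refine ⟨θ ⟨x, hxs⟩, ?_, ?_⟩
    · change (g (θ ⟨x, hxs⟩) : QQ n) ∈ M
      rw [this]; exact hx.1
    · simp only
      rw [this]; rfl
  refine hc.trans (le_exNumFam (fun h => h0 (by simpa [M0] using h)) ?_)
  rintro D ⟨-, ⟨N, hN, M', ⟨F', hF', θ', hθ', hθF', rfl⟩, ρ, hρ, hρN⟩, -⟩ ⟨ψ0, hψ0, hψ0D⟩
  obtain ⟨h1, h2, h3⟩ := hd N hN
  refine hfree N hN (restriction_image ρ hρ ?_)
  refine core h0 F' ((congrArg (· + k) hF').trans (Nat.sub_add_cancel h1)) F hF h2 hM h3 θ' hθ' hθF' (F.subtype ∘ₗ g ∘ₗ ψ0)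
    (Subtype.val_injective.comp (hg.comp hψ0)) (fun x => (g (ψ0 x)).2) ?_
  intro y hy hyF
  rcases hρN hy with ⟨x, hx, rfl⟩ | h
  · exact ⟨x, rfl, hψ0D ⟨x, hx, rfl⟩⟩
  · exact absurd hyF h

lemma lower {𝒩 : Set (Σ k : ℕ, Set (Fin k → ZMod 2))} (h𝒩 : ∀ N ∈ 𝒩, 0 ∉ N.2)
    {k : ℕ} (hk1 : ∀ N ∈ 𝒩, k + 1 ≤ critNum N.2) {n s : ℕ} (hn : k + s ≤ n) :
    ∃ M : Set (QQ n), 0 ∉ M ∧ (∀ N ∈ 𝒩, ¬ HasRestriction N.2 M) ∧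
      M.ncard = 2 ^ n - 2 ^ (n - k) + exNumFam (decompFam 𝒩 k) s := by
  have hkd : ∀ N ∈ 𝒩, k ≤ N.1 := fun N hN => by
    have := critNum_le_dim (h𝒩 N hN)
    have := hk1 N hN
    omega
  have hne : {m | ∃ M : Set (Fin s → ZMod 2), 0 ∉ M ∧
    (∀ N ∈ decompFam 𝒩 k, ¬ HasRestriction N.2 M) ∧ M.ncard = m}.Nonempty := by
    refine ⟨_, ∅, by simp, ?_, rfl⟩
    rintro D ⟨-, ⟨N, hN, M', ⟨F', hF', θ', hθ', hθF', rfl⟩, ρ, hρ, hρN⟩, -⟩ ⟨ψ0, hψ0, hψ0D⟩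
    have hkN := hkd N hN
    obtain ⟨π, -, hπ⟩ := exists_proj (k := k) F' (by simp; omega)
    have := critNum_le' (M := N.2) (π ∘ₗ ρ) (fun x hx h => by
      rcases hρN ⟨x, hx, rfl⟩ with ⟨y, hy, -⟩ | h'
      · exact hψ0D ⟨y, hy, rfl⟩
      · exact h' ((hπ _).1 h))
    have := hk1 N hN
    omega
  have hbdd : BddAbove {m | ∃ M : Set (Fin s → ZMod 2), 0 ∉ M ∧
    (∀ N ∈ decompFam 𝒩 k, ¬ HasRestriction N.2 M) ∧ M.ncard = m} := by
    refine ⟨Nat.card (QQ s), ?_⟩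
    rintro _ ⟨M', _, _, rfl⟩
    rw [← Set.ncard_univ]
    exact Set.ncard_le_ncard (Set.subset_univ _)
  obtain ⟨M0, hM00, hM0, hM0c⟩ := Nat.sSup_mem hne hbdd
  obtain ⟨F, -, hF⟩ := exists_sub_finrank (⊤ : Submodule (ZMod 2) (QQ n)) (r := n - k) (by simp)
  have hFk : Module.finrank (ZMod 2) F + k = n := by omega
  obtain ⟨j, hj⟩ := exists_inj_gen (A := QQ s) (B := F) (by simp; omega)
  obtain ⟨π, -, hπ⟩ := exists_proj (k := k) F (by simp; omega)
  let J : QQ s →ₗ[ZMod 2] QQ n := F.subtype ∘ₗ j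
  have hJ : Function.Injective J := Subtype.val_injective.comp hj
  have hJF : ∀ x, J x ∈ F := fun x => (j x).2
  obtain ⟨r, hr⟩ := LinearMap.exists_leftInverse_of_injective J (LinearMap.ker_eq_bot.2 hJ)
  have hr' : ∀ x, r (J x) = x := fun x => LinearMap.congr_fun hr x
  refine ⟨J '' M0 ∪ {x | x ∉ F}, ?_, ?_, ?_⟩
  · rintro (⟨x, hx, hx0⟩ | h)
    · exact hM00 ((injective_iff_map_eq_zero J).1 hJ x hx0 ▸ hx)
    · exact h F.zero_mem
  · rintro ⟨d, N⟩ hN hNres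
    have hNres' : HasRestriction (α := QQ d) (β := QQ n) N (J '' M0 ∪ {x | x ∉ F}) := hNres
    obtain ⟨ρ, hρ, hρN⟩ := hNres'
    have hkN : k ≤ d := hkd _ hN
    have hN0 : 0 ∉ N := h𝒩 _ hN
    have hrn := LinearMap.finrank_range_add_finrank_ker (π ∘ₗ ρ)
    have hrk : Module.finrank (ZMod 2) (LinearMap.range (π ∘ₗ ρ)) ≤ k := by
      simpa using Submodule.finrank_le (LinearMap.range (π ∘ₗ ρ))
    have hfd : Module.finrank (ZMod 2) (QQ d) = d := by simp
    obtain ⟨F', hF'φ, hF'⟩ := exists_sub_finrank (LinearMap.ker (π ∘ₗ ρ)) (r := d - k) (by omega)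
    have hρF : ∀ x ∈ F', ρ x ∈ F := fun x hx => (hπ _).1 (hF'φ hx)
    let e : QQ (d - k) ≃ₗ[ZMod 2] F' := LinearEquiv.ofFinrankEq _ _ (by simp [hF'])
    let θ : QQ (d - k) →ₗ[ZMod 2] QQ d := F'.subtype ∘ₗ e.toLinearMap
    have hθ : Function.Injective θ := Subtype.val_injective.comp e.injective
    have hθF : ∀ x, θ x ∈ F' := fun x => (e x).2
    have hPP : PP 𝒩 k ⟨d - k, θ ⁻¹' N⟩ := by
      refine ⟨by simpa using hN0, ⟨d, N⟩, hN, _, ⟨F', hF', θ, hθ, hθF, rfl⟩, LinearMap.id,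
        fun a b h => h, ?_⟩
      rintro _ ⟨x, hx, rfl⟩
      by_cases hxF : x ∈ F'
      · left
        have : θ (e.symm ⟨x, hxF⟩) = x := by simp [θ]
        refine ⟨e.symm ⟨x, hxF⟩, ?_, this⟩
        change θ _ ∈ N
        rw [this]; exact hx
      · right; exact hxF
    obtain ⟨D, hD, ψ1, hψ1, hψ1D⟩ := exists_decomp hPP
    let χ : QQ D.1 →ₗ[ZMod 2] QQ n := ρ ∘ₗ θ ∘ₗ ψ1
    have hχ : Function.Injective χ := hρ.comp (hθ.comp hψ1)
    have hχD : ∀ x ∈ D.2, ∃ y ∈ M0, J y = χ x := by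
      intro x hx
      rcases hρN ⟨θ (ψ1 x), hψ1D ⟨x, hx, rfl⟩, rfl⟩ with ⟨y, hy, hyx⟩ | h
      · exact ⟨y, hy, hyx⟩
      · exact absurd (hρF _ (hθF _)) h
    have hrange : ∀ x, J (r (χ x)) = χ x := by
      intro x
      have hx : x ∈ Submodule.span (ZMod 2) D.2 := by rw [decomp_span hD]; trivial
      have : Submodule.span (ZMod 2) D.2 ≤ LinearMap.eqLocus (J ∘ₗ r ∘ₗ χ) χ := by
        rw [Submodule.span_le]
        intro z hz
        obtain ⟨y, -, hy⟩ := hχD z hz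
        change J (r (χ z)) = χ z
        rw [← hy, hr']
      exact this hx
    refine hM0 D hD ⟨r ∘ₗ χ, ?_, ?_⟩
    · intro a b hab
      apply hχ
      rw [← hrange a, ← hrange b]
      exact congrArg J hab
    · rintro _ ⟨x, hx, rfl⟩
      obtain ⟨y, hy, hyx⟩ := hχD x hx
      change r (χ x) ∈ M0
      rw [← hyx, hr']; exact hy
  · rw [Set.ncard_union_eq, ncard_compl_sub F hFk, Set.ncard_image_of_injective _ hJ, hM0c, add_comm]
    · rfl
    · rw [Set.disjoint_left]
      rintro _ ⟨x, -, rfl⟩ h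
      exact h (hJF x)

end Final

/-- Reduction to a finite problem: the error term is `ex(𝒟(𝒩), t − 1)` where `t` is
the smallest size of an independent set whose deletion drops the critical number. -/
theorem finite_problem (𝒩 : Set (Σ k : ℕ, Set (Fin k → ZMod 2)))
    (h𝒩ne : 𝒩.Nonempty) (h𝒩fin : 𝒩.Finite)
    (h𝒩mat : ∀ N ∈ 𝒩, 0 ∉ N.2 ∧ N.2.Nonempty)
    (k : ℕ) (hk1 : ∀ N ∈ 𝒩, k + 1 ≤ critNum N.2) (hk2 : ∃ N ∈ 𝒩, critNum N.2 = k + 1)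
    (t : ℕ)
    (h1 : ∃ N ∈ 𝒩, ∃ I : Set (Fin N.1 → ZMod 2), I ⊆ N.2 ∧ I.ncard = t ∧
      LinearIndependent (ZMod 2) ((↑) : I → (Fin N.1 → ZMod 2)) ∧
      critNum (N.2 \ I) ≤ k)
    (hmin : ∀ N ∈ 𝒩, ∀ I : Set (Fin N.1 → ZMod 2), I ⊆ N.2 →
      LinearIndependent (ZMod 2) ((↑) : I → (Fin N.1 → ZMod 2)) →
      critNum (N.2 \ I) ≤ k → t ≤ I.ncard) :
    ∃ n₀ : ℕ, ∀ n ≥ n₀,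
      exNumFam 𝒩 n = 2 ^ n - 2 ^ (n - k) + exNumFam (decompFam 𝒩 k) (t - 1) := by
  have h𝒩0 : ∀ N ∈ 𝒩, 0 ∉ N.2 := fun N hN => (h𝒩mat N hN).1
  have hkd : ∀ N ∈ 𝒩, k ≤ N.1 := fun N hN => by
    have := critNum_le_dim (h𝒩0 N hN)
    have := hk1 N hN
    omega
  obtain ⟨dm, hdm⟩ : ∃ dm : ℕ, ∀ N ∈ 𝒩, N.1 ≤ dm := by
    obtain ⟨dm, h⟩ := (h𝒩fin.image (fun N => N.1)).bddAbove
    exact ⟨dm, fun N hN => h ⟨N, hN, rfl⟩⟩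
  obtain ⟨N1, hN1, hcN1⟩ := hk2
  obtain ⟨N0, hN0, I, hIN, hIt, hIi, hIc⟩ := h1
  have ht1 : 1 ≤ t := by
    by_contra ht0
    have hI0 : I = ∅ := by
      rw [← Set.ncard_eq_zero]; omega
    rw [hI0, Set.sdiff_empty] at hIc
    have := hk1 N0 hN0
    omega
  set ε : ℝ := 1 / (2 * 2 ^ dm * 2 ^ k) with hε
  have hεpos : 0 < ε := by positivity
  have hεd : ∀ N ∈ 𝒩, (2 : ℝ) ^ N.1 * 2 ^ k * ε < 1 := by
    intro N hN
    have h1 : (2 : ℝ) ^ N.1 ≤ 2 ^ dm := pow_le_pow_right₀ (by norm_num) (hdm N hN)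
    have h2 : (2 : ℝ) ^ dm * 2 ^ k * ε = 1 / 2 := by
      rw [hε]; field_simp
    have h3 : (2 : ℝ) ^ N.1 * 2 ^ k * ε ≤ 2 ^ dm * 2 ^ k * ε := by gcongr
    linarith
  obtain ⟨n₁, hn₁⟩ := stability k N1.1 ε hεpos
  refine ⟨n₁ + dm + k + t, fun n hn => ?_⟩
  obtain ⟨ML, hML0, hMLf, hMLc⟩ := lower h𝒩0 hk1 (n := n) (s := t - 1) (by omega)
  refine le_antisymm ?_ (hMLc ▸ le_exNumFam hML0 hMLf)
  refine csSup_le ⟨_, ML, hML0, hMLf, rfl⟩ ?_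
  rintro _ ⟨M, hM0, hMf, rfl⟩
  by_cases hsmall : M.ncard < 2 ^ n - 2 ^ (n - k)
  · omega
  have hsum := sum_zc M
  have hcV : (Fintype.card (QQ n) : ℝ) = 2 ^ n := by simp [ZMod.card]
  have hpow : 2 ^ (n - k) * 2 ^ k = 2 ^ n := by rw [← pow_add]; congr 1; omega
  have hz : 2 ^ k * ∑ y, zc M y ≤ (Fintype.card (QQ n) : ℝ) := by
    rw [hcV]
    have h1 : 2 ^ n ≤ M.ncard + 2 ^ (n - k) := by omega
    have h1' : (2 : ℝ) ^ n ≤ M.ncard + 2 ^ (n - k) := by exact_mod_cast h1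
    have h2 : ∑ y, zc M y ≤ (2 : ℝ) ^ (n - k) := by linarith
    have h3 : (2 : ℝ) ^ (n - k) * 2 ^ k = 2 ^ n := by exact_mod_cast hpow
    have h4 : (2 : ℝ) ^ k * ∑ y, zc M y ≤ 2 ^ k * 2 ^ (n - k) := by gcongr
    linarith
  have hbb : ¬ HasBB (k + 1) N1.1 M := by
    intro hb
    obtain ⟨φ, hφ⟩ := critNum_spec (h𝒩0 N1 hN1) hcN1.le
    exact hMf N1 hN1 (bb_restriction hM0 φ hφ hb)
  obtain ⟨F, hF, hFz⟩ := hn₁ (QQ n) (by simp; omega) M hbb hz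
  rw [hcV] at hFz
  have hF' : Module.finrank (ZMod 2) F + k = n := by simpa using hF
  have hlt : Module.finrank (ZMod 2) (Submodule.span (ZMod 2) (M ∩ F)) < t := by
    by_contra hge
    have hdN0 := hdm N0 hN0
    exact hMf N0 hN0 (upper_a (h𝒩0 N0 hN0) hM0 (hkd N0 hN0) (by omega) F hF' hFz (hεd N0 hN0)
      I hIN hIt hIi hIc (hmin N0 hN0) (not_lt.1 hge))
  have hb := upper_b (t := t) hM0 (fun N hN => ⟨hkd N hN, by have := hdm N hN; omega, hεd N hN⟩)
    hMf F hF' (by omega) hFz hlt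
  have hc := ncard_compl_sub F hF'
  have hsub : M ⊆ {x | x ∉ F} ∪ (M ∩ F) := by
    intro x hx
    by_cases h : x ∈ F
    · right; exact ⟨hx, h⟩
    · left; exact h
  have h1 := Set.ncard_le_ncard hsub
  have h2 := Set.ncard_union_le {x | x ∉ F} (M ∩ F)
  exact (h1.trans h2).trans (Nat.add_le_add hc.le hb)
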